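/- arXiv:2011.09024 — 2 statements merged into one kernel-verified Lean document; each statement's English description precedes it below -/
import Mathlib

section
/- For any integer d ≥ 2 and any positive integers r and s satisfying d(s-1) < (2^d - 1)r, there exist a constant c > 0 and a threshold N such that for every n ≥ N there is a d-uniform hypergraph on n vertices that contains no copy of K_{2,...,2}^{(d)} and has at least c · n^{d - r/s} edges. In other words, ex_d(n, K_{2,...,2}^{(d)}) = Ω(n^{d - r/s}). -/
/-!
The hypergraph comes from a random multilinear map `T : V ^ d → W` with `V = 𝔽_q ^ s` and
`W = 𝔽_q ^ r`, where `d * q ^ s ≤ n` and `q` is comparable to `n ^ (1 / s)`. The vertices are `d`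
disjoint copies of `V`, and the edges are the tuples `v` with `T v = u`, for a fixed `u ≠ 0`. On
average there are about `q ^ (s d - r)` edges.

A box with sides `{v i, x i}` consisting of edges must have `v i` and `x i` linearly independent
for every `i`: if `x i = a • v i`, then `u = a • u`, so `a = 1`. For such a box the `2 ^ d` values
of `T` are independent and uniform in `W`, so all of them equal `u` with probability
`q ^ (-r 2 ^ d)`, and the expected number of boxes is at most `q ^ (2 s d - r 2 ^ d)`.

By multilinearity, if `T = u` on a box, then `T = u` on the product of the affine lines through
its sides. Hence an edge which is a corner of one box is a corner of at least `(q - 1) ^ d` of them,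
and deleting all such edges costs on average only `O(q ^ (2 s d - r 2 ^ d - d))` edges. This is of
smaller order than `q ^ (s d - r)` exactly when `d (s - 1) < (2 ^ d - 1) r`.
-/

/-- A `d`-uniform hypergraph with edge set `E` on vertex set `Fin n` contains a copy of
`K_{2,…,2}^{(d)}`: there are `2d` distinct vertices `a_1, b_1, …, a_d, b_d` such that all
`2^d` sets `{c_1, …, c_d}` with `c_j ∈ {a_j, b_j}` are edges. -/
def HasBox (d n : ℕ) (E : Finset (Finset (Fin n))) : Prop :=
  ∃ a b : Fin d → Fin n,
    Function.Injective (fun p : Fin d × Bool => if p.2 then b p.1 else a p.1) ∧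
    ∀ ε : Fin d → Bool,
      (Finset.image (fun j => if ε j then b j else a j) Finset.univ) ∈ E

open Finset
open scoped BigOperators

section Boxes

variable {ι : Type*} {V : ι → Type*} {G H : Set (∀ i, V i)} {v x : ∀ i, V i}

/-- The tuples `v` and `x` are opposite corners of a box in `G`: they differ in every coordinate,
and every tuple mixing their coordinates belongs to `G`. This is the ordered, `ι`-partite form of a
copy of `K_{2,…,2}`; the corner `v` is distinguished, so one copy gives `2 ^ |ι|` boxes. -/
def IsBox (G : Set (∀ i, V i)) (v x : ∀ i, V i) : Prop :=
  (∀ i, v i ≠ x i) ∧ Set.univ.pi (fun i ↦ {v i, x i}) ⊆ G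

lemma IsBox.mono (h : IsBox G v x) (hGH : G ⊆ H) : IsBox H v x :=
  ⟨h.1, h.2.trans hGH⟩

lemma IsBox.left_mem (h : IsBox G v x) : v ∈ G :=
  h.2 fun i _ ↦ Set.mem_insert (v i) {x i}

/-- The deletion step of the argument: the tuples of `G` that are not a corner of any box in `G`.
The corners of a box may be permuted, so it suffices to exclude `v` as first corner. -/
def boxFreePart (G : Set (∀ i, V i)) : Set (∀ i, V i) :=
  {v ∈ G | ∀ x, ¬IsBox G v x}

lemma not_isBox_boxFreePart (G : Set (∀ i, V i)) (v x : ∀ i, V i) : ¬IsBox (boxFreePart G) v x :=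
  fun h ↦ h.left_mem.2 x (h.mono (Set.sep_subset G _))

lemma ncard_sub_le_ncard_boxFreePart [Finite ι] [∀ i, Finite (V i)] {m : ℕ} (hm : 0 < m)
    (hG : ∀ v x, IsBox G v x → m ≤ {y | IsBox G v y}.ncard) :
    (G.ncard : ℝ) - ({b : (∀ i, V i) × (∀ i, V i) | IsBox G b.1 b.2}.ncard : ℝ) / m ≤
      ((boxFreePart G).ncard : ℝ) := by
  classical
  cases nonempty_fintype ι
  have := fun i ↦ Fintype.ofFinite (V i)
  have hdel : m * {v | ∃ x, IsBox G v x}.ncard ≤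
      {b : (∀ i, V i) × (∀ i, V i) | IsBox G b.1 b.2}.ncard := by
    simp only [Set.ncard_eq_toFinset_card', Set.toFinset_ofPred] at hG ⊢
    refine mul_card_image_le_card_of_maps_to (f := Prod.fst) (fun b hb ↦ ?_) m fun v hv ↦ ?_
    · exact mem_filter.2 ⟨mem_univ _, b.2, (mem_filter.1 hb).2⟩
    · obtain ⟨x, hx⟩ := (mem_filter.1 hv).2
      refine (hG v x hx).trans (card_le_card_of_injOn (Prod.mk v) ?_ (by simp))
      intro y hy
      simpa using hy
  have hcover : G.ncard ≤ (boxFreePart G).ncard + {v | ∃ x, IsBox G v x}.ncard := by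
    refine (Set.ncard_le_ncard fun v hv ↦ ?_).trans (Set.ncard_union_le _ _)
    by_cases h : ∃ x, IsBox G v x
    · exact Or.inr h
    · exact Or.inl ⟨hv, not_exists.1 h⟩
  have hm' : (0 : ℝ) < m := by exact_mod_cast hm
  rw [sub_le_iff_le_add]
  calc (G.ncard : ℝ) ≤ (boxFreePart G).ncard + ({v | ∃ x, IsBox G v x}.ncard : ℝ) := by
        exact_mod_cast hcover
    _ ≤ _ := by
        gcongr
        rw [le_div_iff₀' hm']
        exact_mod_cast hdel

end Boxes

section Hypergraph

variable {ι α : Type*} [Fintype ι] {V : ι → Type*}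

/-- The edge of an `ι`-partite hypergraph given by a choice `v i` of one vertex in each part `V i`;
the parts are placed disjointly into the vertex set `α` by `f`. -/
def tupleEdge (f : (Σ i, V i) ↪ α) (v : ∀ i, V i) : Finset α :=
  (univ.sigma fun i ↦ {v i}).map f

lemma mem_tupleEdge {f : (Σ i, V i) ↪ α} {v : ∀ i, V i} {a : α} :
    a ∈ tupleEdge f v ↔ ∃ i, f ⟨i, v i⟩ = a := by
  simp [tupleEdge, Sigma.exists]

lemma apply_mem_tupleEdge {f : (Σ i, V i) ↪ α} {v : ∀ i, V i} {i : ι} {y : V i} :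
    f ⟨i, y⟩ ∈ tupleEdge f v ↔ y = v i := by
  simp [tupleEdge]

lemma card_tupleEdge (f : (Σ i, V i) ↪ α) (v : ∀ i, V i) : #(tupleEdge f v) = Fintype.card ι := by
  simp [tupleEdge]

lemma tupleEdge_injective (f : (Σ i, V i) ↪ α) : Function.Injective (tupleEdge f) := by
  intro v w h
  funext i
  rw [← apply_mem_tupleEdge (f := f), ← h, apply_mem_tupleEdge]

lemma exists_surjective_forall_apply_eq {f : (Σ i, V i) ↪ α} {a b : ι → α}
    (ha : Function.Injective a) (hab : ∀ j k, a j ≠ b k)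
    (h : ∀ ε : ι → Bool, ∃ w, ∀ j, (if ε j then b j else a j) ∈ tupleEdge f w) :
    ∃ (σ : ι → ι) (v x : ∀ i, V i), Function.Surjective σ ∧
      (∀ j, f ⟨σ j, v (σ j)⟩ = a j) ∧ ∀ j, f ⟨σ j, x (σ j)⟩ = b j := by
  classical
  obtain ⟨v, hv⟩ := h fun _ ↦ false
  obtain ⟨x, hx⟩ := h fun _ ↦ true
  choose σ hσ using fun j ↦ mem_tupleEdge.1 (hv j)
  choose τ hτ using fun j ↦ mem_tupleEdge.1 (hx j)
  simp only [Bool.false_eq_true, if_false, if_true] at hσ hτ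
  have hσ_surj : Function.Surjective σ := Finite.surjective_of_injective fun j k hjk ↦
    ha <| by rw [← hσ j, ← hσ k, hjk]
  -- Exchanging only `a j` for `b j` leaves a transversal edge, so `b j` lies in the part of `a j`.
  have hτσ (j) : τ j = σ j := by
    obtain ⟨k, hk⟩ := hσ_surj (τ j)
    by_contra hjk
    have hkj : k ≠ j := fun h ↦ hjk (h ▸ hk.symm)
    obtain ⟨w, hw⟩ := h fun l ↦ decide (l = j)
    have hvw : v (σ k) = w (σ k) := by
      simpa [hkj, ← hσ, apply_mem_tupleEdge] using hw k
    have hxw : x (τ j) = w (τ j) := by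
      simpa [← hτ, apply_mem_tupleEdge] using hw j
    exact hab k j <| by rw [← hσ, ← hτ, hvw, hxw, hk]
  exact ⟨σ, v, x, hσ_surj, hσ, fun j ↦ by rw [← hτσ, hτ]⟩

lemma exists_isBox_of_hasBox {d n : ℕ} {V : Fin d → Type*} {f : (Σ i, V i) ↪ Fin n}
    {G : Set (∀ i, V i)} {E : Finset (Finset (Fin n))} (hE : ∀ e ∈ E, ∃ v ∈ G, tupleEdge f v = e)
    (h : HasBox d n E) : ∃ v x, IsBox G v x := by
  classical
  obtain ⟨a, b, hab, hbox⟩ := h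
  have ha : Function.Injective a := fun j k hjk ↦ congrArg Prod.fst (@hab (j, false) (k, false) hjk)
  have hne (j k) : a j ≠ b k := fun hjk ↦ by simpa using @hab (j, false) (k, true) hjk
  have hedge (ε : Fin d → Bool) : ∃ w ∈ G, ∀ j, (if ε j then b j else a j) ∈ tupleEdge f w := by
    obtain ⟨w, hwG, hw⟩ := hE _ (hbox ε)
    exact ⟨w, hwG, fun j ↦ hw ▸ mem_image_of_mem _ (mem_univ j)⟩
  obtain ⟨σ, v, x, hσ, hv, hx⟩ := exists_surjective_forall_apply_eq (f := f) ha hne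
    fun ε ↦ (hedge ε).imp fun _ ↦ And.right
  have hvx : ∀ i, v i ≠ x i := hσ.forall.2 fun j hj ↦ hne j j <| by rw [← hv, ← hx, hj]
  refine ⟨v, x, hvx, fun w hw ↦ ?_⟩
  obtain ⟨w', hw'G, hw'⟩ := hedge fun j ↦ decide (w (σ j) = x (σ j))
  suffices w = w' from this ▸ hw'G
  refine funext <| hσ.forall.2 fun j ↦ ?_
  rw [← apply_mem_tupleEdge (f := f)]
  convert hw' j
  rcases hw (σ j) trivial with h | h
  · simp [h, hvx (σ j), hv]
  · simp [Set.mem_singleton_iff.1 h, hx]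

lemma exists_hypergraph_of_forall_not_isBox {d n : ℕ} {V : Fin d → Type*} [∀ i, Finite (V i)]
    (hn : ∑ i, Nat.card (V i) ≤ n) (G : Set (∀ i, V i)) (hG : ∀ v x, ¬IsBox G v x) :
    ∃ E : Finset (Finset (Fin n)), (∀ e ∈ E, #e = d) ∧ ¬HasBox d n E ∧ #E = G.ncard := by
  have := fun i ↦ Fintype.ofFinite (V i)
  obtain ⟨f⟩ : Nonempty ((Σ i, V i) ↪ Fin n) := Function.Embedding.nonempty_of_card_le <| by
    simpa using hn
  have hE {e} : e ∈ (tupleEdge f '' G).toFinite.toFinset ↔ ∃ v ∈ G, tupleEdge f v = e := by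
    simp
  refine ⟨(tupleEdge f '' G).toFinite.toFinset, fun e he ↦ ?_, fun h ↦ ?_, ?_⟩
  · obtain ⟨v, -, rfl⟩ := hE.1 he
    simp [card_tupleEdge]
  · obtain ⟨v, x, hvx⟩ := exists_isBox_of_hasBox (fun e ↦ hE.1) h
    exact hG v x hvx
  · rw [← Set.ncard_eq_toFinset_card, Set.ncard_image_of_injective _ (tupleEdge_injective f)]

end Hypergraph

lemma expect_ncard {α β : Type*} [Fintype α] [Fintype β] (P : α → β → Prop) :
    𝔼 a, ({b | P a b}.ncard : ℝ) = ∑ b, ({a | P a b}.ncard : ℝ) / Nat.card α := by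
  classical
  simp only [Set.ncard_eq_toFinset_card', Set.toFinset_ofPred, Fintype.expect_eq_sum_div_card,
    ← sum_div, Nat.card_eq_fintype_card]
  congr 1
  exact_mod_cast sum_card_bipartiteAbove_eq_sum_card_bipartiteBelow P

section Multilinear

variable {ι K W : Type*} {V : ι → Type*} [Field K] [∀ i, AddCommGroup (V i)] [∀ i, Module K (V i)]
  [AddCommGroup W] [Module K W] {T : MultilinearMap K V W} {u : W} {v x : ∀ i, V i}

lemma apply_lineMap_eq_of_forall_mem_box [Finite ι]
    (h : ∀ w ∈ Set.univ.pi fun i ↦ ({v i, x i} : Set (V i)), T w = u) (t : ι → K) :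
    T (fun i ↦ AffineMap.lineMap (v i) (x i) (t i)) = u := by
  classical
  cases nonempty_fintype ι
  have hcorner (S : Finset ι) : T (S.piecewise x v) = u := by
    refine h _ fun i _ ↦ ?_
    by_cases hi : i ∈ S <;> simp [hi]
  have hterm (S : Finset ι) :
      T (S.piecewise (fun i ↦ t i • x i) (fun i ↦ (1 - t i) • v i)) =
        ((∏ i ∈ S, t i) * ∏ i ∈ Sᶜ, (1 - t i)) • u := by
    have hscale : S.piecewise (fun i ↦ t i • x i) (fun i ↦ (1 - t i) • v i) =
        fun i ↦ S.piecewise t (1 - t) i • S.piecewise x v i := by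
      funext i
      by_cases hi : i ∈ S <;> simp [hi]
    rw [hscale, T.map_smul_univ, hcorner, prod_piecewise]
    simp [compl_eq_univ_sdiff]
  calc T (fun i ↦ AffineMap.lineMap (v i) (x i) (t i))
      = T ((fun i ↦ t i • x i) + fun i ↦ (1 - t i) • v i) := by
        congr 1
        funext i
        simp [AffineMap.lineMap_apply_module, add_comm]
    _ = (∏ i, (t i + (1 - t i))) • u := by
        rw [T.map_add_univ, sum_congr rfl fun S _ ↦ hterm S, ← sum_smul, Fintype.prod_add]
    _ = u := by simp

lemma IsBox.lineMap [Finite ι] (h : IsBox {w | T w = u} v x) {t : ι → K} (ht : ∀ i, t i ≠ 0) :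
    IsBox {w | T w = u} v fun i ↦ AffineMap.lineMap (v i) (x i) (t i) := by
  classical
  refine ⟨fun i hi ↦ ?_, fun w hw ↦ ?_⟩
  · rcases AffineMap.lineMap_eq_left_iff.1 hi.symm with hvx | hti
    exacts [h.1 i hvx, ht i hti]
  · have hw' : w = fun i ↦ AffineMap.lineMap (v i) (x i) (if w i = v i then 0 else t i) := by
      funext i
      split_ifs with hi
      · simp [hi]
      · exact (hw i trivial).resolve_left hi
    rw [hw']
    exact apply_lineMap_eq_of_forall_mem_box h.2 _

lemma IsBox.linearIndependent (hu : u ≠ 0) (h : IsBox {w | T w = u} v x) (i : ι) :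
    LinearIndependent K ![v i, x i] := by
  classical
  have hv : T v = u := h.left_mem
  have hvi : v i ≠ 0 := fun h0 ↦ hu <| by rw [← hv, T.map_coord_zero i h0]
  rw [LinearIndependent.pair_iff' hvi]
  intro a ha
  have hau : a • u = u := by
    have hmem : Function.update v i (x i) ∈ {w | T w = u} := by
      refine h.2 fun j _ ↦ ?_
      obtain rfl | hj := eq_or_ne j i <;> simp [*]
    rwa [← ha, Set.mem_ofPred_eq, T.map_update_smul, Function.update_eq_self, hv] at hmem
  have ha1 : a = 1 := smul_left_injective K hu <| by simpa using hau
  exact h.1 i <| by simpa [ha1] using ha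

lemma IsBox.card_sub_one_pow_le_ncard [Fintype ι] [Finite K] [∀ i, Finite (V i)]
    (h : IsBox {w | T w = u} v x) :
    (Nat.card K - 1) ^ Fintype.card ι ≤ {y | IsBox {w | T w = u} v y}.ncard := by
  classical
  calc (Nat.card K - 1) ^ Fintype.card ι = (Set.univ : Set (ι → Kˣ)).ncard := by
        rw [Set.ncard_univ, Nat.card_fun, Nat.card_units, ← Nat.card_eq_fintype_card]
    _ ≤ _ := by
        refine Set.ncard_le_ncard_of_injOn
          (fun t i ↦ AffineMap.lineMap (v i) (x i) (t i : K))
          (fun t _ ↦ h.lineMap fun i ↦ (t i).ne_zero) fun t _ t' _ htt' ↦ ?_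
        funext i
        exact Units.ext <| AffineMap.lineMap_injective K (h.1 i) <| congrFun htt' i

lemma exists_multilinearMap_forall_apply_eq [Finite ι] {κ : ι → Type*} [∀ i, Finite (κ i)]
    {p : ∀ i, κ i → V i} (hp : ∀ i, LinearIndependent K (p i)) (c : (∀ i, κ i) → W) :
    ∃ T : MultilinearMap K V W, ∀ δ, T (fun i ↦ p i (δ i)) = c δ := by
  classical
  cases nonempty_fintype ι
  have := fun i ↦ Fintype.ofFinite (κ i)
  choose g hg using fun i ↦
    LinearMap.exists_leftInverse_of_injective _ (LinearMap.ker_eq_bot.2 (hp i))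
  have hg' (i) (k : κ i) : g i (p i k) = Finsupp.single k 1 := by
    simpa using LinearMap.congr_fun (hg i) (Finsupp.single k 1)
  refine ⟨∑ ε, (MultilinearMap.mkPiRing K ι (c ε)).compLinearMap
    fun i ↦ Finsupp.lapply (ε i) ∘ₗ g i, fun δ ↦ ?_⟩
  have hprod (ε : ∀ i, κ i) : ∏ i, Finsupp.single (δ i) (1 : K) (ε i) = if δ = ε then 1 else 0 := by
    simp only [Finsupp.single_apply, prod_ite_zero, prod_const_one, mem_univ, true_imp_iff,
      funext_iff]
  simp [hg', hprod]

lemma ncard_fiber_mul_card_of_surjective {A B : Type*} [AddGroup A] [AddGroup B] {f : A →+ B}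
    (hf : Function.Surjective f) (b : B) : {a | f a = b}.ncard * Nat.card B = Nat.card A := by
  obtain ⟨a₀, rfl⟩ := hf b
  have hcoset : {a | f a = f a₀} = (a₀ + ·) '' f.ker := by
    ext a
    simp [f.mem_ker, neg_add_eq_zero, eq_comm (a := f a)]
  calc {a | f a = f a₀}.ncard * Nat.card B = Nat.card f.ker * f.ker.index := by
        rw [hcoset, Set.ncard_image_of_injective _ (add_right_injective a₀), AddSubgroup.index_ker,
          f.range_eq_top.2 hf, AddSubgroup.card_top]
        rfl
    _ = Nat.card A := f.ker.card_mul_index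

lemma ncard_div_card_multilinearMap [Finite ι] [∀ i, Finite (V i)] [Finite W]
    {κ : ι → Type*} [∀ i, Finite (κ i)] {p : ∀ i, κ i → V i}
    (hp : ∀ i, LinearIndependent K (p i)) (u : W) :
    ({T : MultilinearMap K V W | ∀ δ : ∀ i, κ i, T (fun i ↦ p i (δ i)) = u}.ncard : ℝ) /
      Nat.card (MultilinearMap K V W) = 1 / (Nat.card W : ℝ) ^ Nat.card (∀ i, κ i) := by
  let eval : MultilinearMap K V W →+ ((∀ i, κ i) → W) :=
    { toFun T δ := T fun i ↦ p i (δ i)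
      map_zero' := by ext; simp
      map_add' _ _ := by ext; simp }
  have heval : Function.Surjective eval := fun c ↦
    (exists_multilinearMap_forall_apply_eq hp c).imp fun T ↦ funext
  have : Finite (MultilinearMap K V W) := DFunLike.finite _
  have hcard := ncard_fiber_mul_card_of_surjective heval fun _ ↦ u
  rw [Nat.card_fun] at hcard
  have hM : (Nat.card (MultilinearMap K V W) : ℝ) ≠ 0 := Nat.cast_ne_zero.2 Nat.card_pos.ne'
  have hW : (Nat.card W : ℝ) ≠ 0 := Nat.cast_ne_zero.2 Nat.card_pos.ne'
  rw [div_eq_div_iff hM (pow_ne_zero _ hW), one_mul]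
  simp only [eval, AddMonoidHom.coe_mk, ZeroHom.coe_mk, funext_iff] at hcard
  exact_mod_cast hcard

lemma prod_card_sub_one_div_le_expect_ncard [Fintype ι] [∀ i, Finite (V i)] [Finite W]
    [Fintype (MultilinearMap K V W)] (u : W) :
    (∏ i, ((Nat.card (V i) : ℝ) - 1)) / Nat.card W ≤
      𝔼 T : MultilinearMap K V W, ({v | T v = u}.ncard : ℝ) := by
  classical
  have := fun i ↦ Fintype.ofFinite (V i)
  let S : Finset (∀ i, V i) := Fintype.piFinset fun i ↦ univ.erase 0
  have hS : (#S : ℝ) = ∏ i, ((Nat.card (V i) : ℝ) - 1) := by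
    simp [S, Nat.cast_sub Fintype.card_pos]
  have hprob : ∀ v ∈ S, ({T : MultilinearMap K V W | T v = u}.ncard : ℝ) /
      Nat.card (MultilinearMap K V W) = 1 / Nat.card W := by
    intro v hv
    have hv0 (i) : v i ≠ 0 := ne_of_mem_erase (Fintype.mem_piFinset.1 hv i)
    have hli (i) : LinearIndependent K fun _ : Unit ↦ v i :=
      linearIndependent_unique_iff.2 (hv0 i)
    simpa using ncard_div_card_multilinearMap hli u
  calc (∏ i, ((Nat.card (V i) : ℝ) - 1)) / Nat.card W
      = ∑ v ∈ S, ({T : MultilinearMap K V W | T v = u}.ncard : ℝ) /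
          Nat.card (MultilinearMap K V W) := by
        rw [sum_congr rfl hprob, sum_const, nsmul_eq_mul, hS, mul_one_div]
    _ ≤ ∑ v, ({T : MultilinearMap K V W | T v = u}.ncard : ℝ) /
          Nat.card (MultilinearMap K V W) :=
        sum_le_sum_of_subset_of_nonneg (subset_univ S) fun _ _ _ ↦ by positivity
    _ = 𝔼 T : MultilinearMap K V W, ({v | T v = u}.ncard : ℝ) := (expect_ncard _).symm

lemma expect_ncard_isBox_le [Fintype ι] [∀ i, Finite (V i)] [Finite W]
    [Fintype (MultilinearMap K V W)] (hu : u ≠ 0) :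
    𝔼 T : MultilinearMap K V W,
        ({b : (∀ i, V i) × (∀ i, V i) | IsBox {w | T w = u} b.1 b.2}.ncard : ℝ) ≤
      (∏ i, (Nat.card (V i) : ℝ)) ^ 2 / (Nat.card W : ℝ) ^ 2 ^ Fintype.card ι := by
  classical
  have := fun i ↦ Fintype.ofFinite (V i)
  have hprob (b : (∀ i, V i) × (∀ i, V i)) :
      ({T : MultilinearMap K V W | IsBox {w | T w = u} b.1 b.2}.ncard : ℝ) /
        Nat.card (MultilinearMap K V W) ≤ 1 / (Nat.card W : ℝ) ^ 2 ^ Fintype.card ι := by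
    obtain ⟨v, x⟩ := b
    by_cases hli : ∀ i, LinearIndependent K ![v i, x i]
    · have hsub : {T : MultilinearMap K V W | IsBox {w | T w = u} v x} ⊆
          {T | ∀ δ : ι → Fin 2, T (fun i ↦ ![v i, x i] (δ i)) = u} := by
        refine fun T hT δ ↦ hT.2 fun i _ ↦ ?_
        match δ i with
        | 0 => exact Or.inl rfl
        | 1 => exact Or.inr rfl
      refine (div_le_div_of_nonneg_right (Nat.cast_le.2 (Set.ncard_le_ncard hsub))
        (Nat.cast_nonneg _)).trans_eq ?_
      simpa using ncard_div_card_multilinearMap hli u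
    · have hempty : {T : MultilinearMap K V W | IsBox {w | T w = u} v x} = ∅ :=
        Set.eq_empty_of_forall_notMem fun T hT ↦ hli (hT.linearIndependent hu)
      rw [hempty, Set.ncard_empty, Nat.cast_zero, zero_div]
      positivity
  rw [expect_ncard fun (T : MultilinearMap K V W) (b : (∀ i, V i) × (∀ i, V i)) ↦
    IsBox {w | T w = u} b.1 b.2]
  refine (sum_le_sum fun b _ ↦ hprob b).trans_eq ?_
  simp [← sq, div_eq_mul_inv]

lemma exists_multilinearMap_le_ncard_boxFreePart [Fintype ι] [Finite K] [∀ i, Finite (V i)]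
    [Finite W] (hu : u ≠ 0) :
    ∃ T : MultilinearMap K V W,
      (∏ i, ((Nat.card (V i) : ℝ) - 1)) / Nat.card W -
          (∏ i, (Nat.card (V i) : ℝ)) ^ 2 /
            ((Nat.card W : ℝ) ^ 2 ^ Fintype.card ι * ((Nat.card K : ℝ) - 1) ^ Fintype.card ι) ≤
        ((boxFreePart {w | T w = u}).ncard : ℝ) := by
  have : Finite (MultilinearMap K V W) := DFunLike.finite _
  have := Fintype.ofFinite (MultilinearMap K V W)
  have hK : 1 < Nat.card K := Finite.one_lt_card
  have hm : (((Nat.card K - 1) ^ Fintype.card ι : ℕ) : ℝ) =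
      ((Nat.card K : ℝ) - 1) ^ Fintype.card ι := by
    rw [Nat.cast_pow, Nat.cast_pred Nat.card_pos]
  suffices hmean : _ ≤ 𝔼 T : MultilinearMap K V W, (({w | T w = u}.ncard : ℝ) -
      ({b : (∀ i, V i) × (∀ i, V i) | IsBox {w | T w = u} b.1 b.2}.ncard : ℝ) /
        ((Nat.card K - 1) ^ Fintype.card ι : ℕ)) by
    obtain ⟨T, -, hT⟩ := exists_le_of_le_expect univ_nonempty hmean
    exact ⟨T, hT.trans <| ncard_sub_le_ncard_boxFreePart (pow_pos (Nat.sub_pos_of_lt hK) _)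
      fun v x h ↦ h.card_sub_one_pow_le_ncard⟩
  rw [expect_sub_distrib, ← expect_div, hm, ← div_div]
  have hK' : 0 ≤ (Nat.card K : ℝ) - 1 := sub_nonneg.2 (by exact_mod_cast hK.le)
  gcongr
  · exact prod_card_sub_one_div_le_expect_ncard u
  · exact expect_ncard_isBox_le hu

end Multilinear

lemma eventually_exists_prime_le_lt {f : ℕ → ℕ} (hf : StrictMono f) (B : ℕ) :
    ∀ᶠ n in Filter.atTop, ∃ p, p.Prime ∧ B ≤ p ∧ f p ≤ n ∧ n < f (2 * p) := by
  obtain ⟨p₀, hBp₀, hp₀⟩ := Nat.exists_infinite_primes B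
  filter_upwards [Filter.eventually_ge_atTop (f p₀)] with n hn
  set p := Nat.findGreatest (fun p ↦ p.Prime ∧ f p ≤ n) n
  have hp₀p : p₀ ≤ p := Nat.le_findGreatest (hf.le_apply.trans hn) ⟨hp₀, hn⟩
  obtain ⟨hp, hpn⟩ : p.Prime ∧ f p ≤ n :=
    Nat.findGreatest_spec (P := fun p ↦ p.Prime ∧ f p ≤ n) (hf.le_apply.trans hn) ⟨hp₀, hn⟩
  refine ⟨p, hp, hBp₀.trans hp₀p, hpn, ?_⟩
  obtain ⟨l, hl, hpl, hlp⟩ := Nat.exists_prime_lt_and_le_two_mul p hp.ne_zero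
  by_contra! hn2
  have hln : f l ≤ n := (hf.monotone hlp).trans hn2
  exact Nat.findGreatest_is_greatest hpl (hf.le_apply.trans hln) ⟨hl, hln⟩

lemma rpow_sub_div_le {x p C : ℝ} {d r s : ℕ} (hp : 0 < p) (hs : 0 < s)
    (hpx : p ^ s ≤ x) (hxp : x ≤ C * p ^ s) :
    x ^ ((d : ℝ) - (r : ℝ) / s) ≤ C ^ d * (p ^ (s * d) / p ^ r) := by
  have hx : 0 < x := (pow_pos hp s).trans_le hpx
  have hroot : p ^ r ≤ x ^ ((r : ℝ) / s) := by
    calc p ^ r = (p ^ s) ^ ((r : ℝ) / s) := by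
          rw [← Real.rpow_natCast_mul hp.le, mul_div_cancel₀ _ (by positivity), Real.rpow_natCast]
      _ ≤ x ^ ((r : ℝ) / s) := by gcongr
  calc x ^ ((d : ℝ) - (r : ℝ) / s) = x ^ d / x ^ ((r : ℝ) / s) := by
        rw [Real.rpow_sub hx, Real.rpow_natCast]
    _ ≤ (C * p ^ s) ^ d / p ^ r := by
        have := hx.le.trans hxp
        gcongr
    _ = C ^ d * (p ^ (s * d) / p ^ r) := by rw [mul_pow, ← pow_mul, mul_div_assoc]

lemma deletion_term_le {d r s : ℕ} {q : ℝ} (hs : 0 < s)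
    (hrs : d * (s - 1) < (2 ^ d - 1) * r) (hq : 2 ^ (2 * d + 1) ≤ q) :
    ((q ^ s) ^ d) ^ 2 / ((q ^ r) ^ 2 ^ d * (q - 1) ^ d) ≤ q ^ (s * d) / q ^ r / 2 ^ (d + 1) := by
  have hq2 : 2 ≤ q := (le_self_pow₀ one_le_two (Nat.succ_ne_zero _)).trans hq
  have hexp : s * d * 2 + r + 1 ≤ s * d + r * 2 ^ d + d := by
    zify [Nat.one_le_two_pow, hs] at hrs ⊢
    linarith
  have hpow : q ^ (s * d * 2) * q ^ r * q ≤ q ^ (s * d) * q ^ (r * 2 ^ d) * q ^ d := by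
    simp only [← pow_add, ← pow_succ]
    exact pow_le_pow_right₀ (one_le_two.trans hq2) hexp
  calc ((q ^ s) ^ d) ^ 2 / ((q ^ r) ^ 2 ^ d * (q - 1) ^ d)
      ≤ ((q ^ s) ^ d) ^ 2 / ((q ^ r) ^ 2 ^ d * (q / 2) ^ d) := by
        gcongr
        linarith
    _ = q ^ (s * d * 2) * q ^ r * 2 ^ (2 * d + 1) /
          (q ^ (r * 2 ^ d) * q ^ d * (q ^ r * 2 ^ (d + 1))) := by
        rw [div_pow]
        field_simp
        ring
    _ ≤ q ^ (s * d * 2) * q ^ r * q / (q ^ (r * 2 ^ d) * q ^ d * (q ^ r * 2 ^ (d + 1))) := by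
        gcongr
    _ ≤ q ^ (s * d) * q ^ (r * 2 ^ d) * q ^ d /
          (q ^ (r * 2 ^ d) * q ^ d * (q ^ r * 2 ^ (d + 1))) := by
        gcongr
    _ = q ^ (s * d) / q ^ r / 2 ^ (d + 1) := by field_simp

lemma main_term_div_le_sub_deletion_term {d r s : ℕ} {q : ℝ} (hs : 0 < s)
    (hrs : d * (s - 1) < (2 ^ d - 1) * r) (hq : 2 ^ (2 * d + 1) ≤ q) :
    q ^ (s * d) / q ^ r / 2 ^ (d + 1) ≤
      (q ^ s - 1) ^ d / q ^ r - ((q ^ s) ^ d) ^ 2 / ((q ^ r) ^ 2 ^ d * (q - 1) ^ d) := by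
  have hq2 : 2 ≤ q := (le_self_pow₀ one_le_two (Nat.succ_ne_zero _)).trans hq
  have hqs : 2 ≤ q ^ s := hq2.trans (le_self_pow₀ (one_le_two.trans hq2) hs.ne')
  have hedges : 2 * (q ^ (s * d) / q ^ r / 2 ^ (d + 1)) ≤ (q ^ s - 1) ^ d / q ^ r := by
    calc 2 * (q ^ (s * d) / q ^ r / 2 ^ (d + 1)) = (q ^ s / 2) ^ d / q ^ r := by
          rw [div_pow, ← pow_mul, pow_succ]
          field_simp
      _ ≤ (q ^ s - 1) ^ d / q ^ r := by
          gcongr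
          linarith
  linarith [deletion_term_le hs hrs hq]

lemma exists_hypergraph_of_finiteField (K : Type*) [Field K] [Finite K] {d r s n : ℕ}
    (hr : 0 < r) (hs : 0 < s) (hrs : d * (s - 1) < (2 ^ d - 1) * r)
    (hK : 2 ^ (2 * d + 1) ≤ Nat.card K) (hn : d * Nat.card K ^ s ≤ n) :
    ∃ E : Finset (Finset (Fin n)), (∀ e ∈ E, #e = d) ∧ ¬HasBox d n E ∧
      (Nat.card K : ℝ) ^ (s * d) / (Nat.card K : ℝ) ^ r / 2 ^ (d + 1) ≤ #E := by
  have hu : (fun _ ↦ 1 : Fin r → K) ≠ 0 := fun h ↦ one_ne_zero (congrFun h ⟨0, hr⟩)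
  obtain ⟨T, hT⟩ := exists_multilinearMap_le_ncard_boxFreePart
    (K := K) (V := fun _ : Fin d ↦ Fin s → K) hu
  obtain ⟨E, hEd, hE, hcard⟩ :=
    exists_hypergraph_of_forall_not_isBox (n := n) (by simpa [Nat.card_fun] using hn) _
      (not_isBox_boxFreePart {w | T w = fun _ ↦ 1})
  have hterm := main_term_div_le_sub_deletion_term (q := Nat.card K) hs hrs (by exact_mod_cast hK)
  refine ⟨E, hEd, hE, hterm.trans ?_⟩
  simpa [hcard, Nat.card_fun] using hT

/-- Theorem 2 (main theorem): if `d ≥ 2` and `r, s` are positive integers with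
`d(s-1) < (2^d - 1) r`, then `ex_d(n, K_{2,…,2}^{(d)}) = Ω(n^{d - r/s})`. -/
theorem box_problem_lower_bound (d r s : ℕ) (hd : 2 ≤ d) (hr : 0 < r) (hs : 0 < s)
    (hrs : d * (s - 1) < (2 ^ d - 1) * r) :
    ∃ c : ℝ, 0 < c ∧ ∃ N : ℕ, ∀ n : ℕ, N ≤ n →
      ∃ E : Finset (Finset (Fin n)),
        (∀ e ∈ E, e.card = d) ∧ ¬ HasBox d n E ∧
        c * (n : ℝ) ^ ((d : ℝ) - (r : ℝ) / (s : ℝ)) ≤ (E.card : ℝ) := by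
  have hd0 : 0 < d := by positivity
  refine ⟨1 / ((d * 2 ^ s) ^ d * 2 ^ (d + 1)), by positivity, ?_⟩
  have hmono : StrictMono fun p : ℕ ↦ d * p ^ s :=
    (Nat.pow_left_strictMono hs.ne').const_mul hd0
  obtain ⟨N, hN⟩ :=
    Filter.eventually_atTop.1 (eventually_exists_prime_le_lt hmono (2 ^ (2 * d + 1)))
  refine ⟨N, fun n hn ↦ ?_⟩
  obtain ⟨p, hp, hpd, hpn, hnp⟩ := hN n hn
  have : Fact p.Prime := ⟨hp⟩
  obtain ⟨E, hEd, hE, hcard⟩ := exists_hypergraph_of_finiteField (ZMod p) hr hs hrs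
    (by simpa using hpd) (by simpa using hpn)
  refine ⟨E, hEd, hE, le_trans ?_ (by simpa using hcard)⟩
  have hpn' : (p : ℝ) ^ s ≤ n := by exact_mod_cast (Nat.le_mul_of_pos_left _ hd0).trans hpn
  have hnp' : (n : ℝ) ≤ d * 2 ^ s * p ^ s := by
    rw [mul_assoc, ← mul_pow]
    exact_mod_cast hnp.le
  rw [one_div_mul_eq_div, div_le_iff₀ (by positivity)]
  calc (n : ℝ) ^ ((d : ℝ) - r / s) ≤ (d * 2 ^ s) ^ d * (p ^ (s * d) / p ^ r) :=
        rpow_sub_div_le (by exact_mod_cast hp.pos) hs hpn' hnp'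
    _ = p ^ (s * d) / p ^ r / 2 ^ (d + 1) * ((d * 2 ^ s) ^ d * 2 ^ (d + 1)) := by field_simp
end

section
/- For any integer d ≥ 2, there exists a positive constant C depending only on d and an infinite set S of positive integers such that for every n ∈ S, the number of d-uniform hypergraphs with vertex set {1,...,n} containing no copy of K_{2,...,2}^{(d)} is at most 2^{C · ex_d(n, K_{2,...,2}^{(d)})}. -/
/-- `ex_d(n, K_{2,…,2}^{(d)})`: the maximum number of edges in a `d`-uniform hypergraph
on `n` vertices containing no copy of `K_{2,…,2}^{(d)}`. -/
noncomputable def exBox (d n : ℕ) : ℕ :=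
  sSup {m : ℕ | ∃ E : Finset (Finset (Fin n)),
    (∀ e ∈ E, e.card = d) ∧ ¬ HasBox d n E ∧ E.card = m}

namespace BoxCount

open Finset

/-! ### Weighted containers -/

section Containers

variable {α : Type*} {w w' : Finset α → ℝ} {E G T : Finset α} {v : α} {k : ℕ} {D p : ℝ}

/-- `w` is a weighted `k`-uniform hypergraph on the vertex set `G`. -/
structure IsUniformOn (G : Finset α) (k : ℕ) (w : Finset α → ℝ) : Prop where
  nonneg : 0 ≤ w
  subset : ∀ {E}, w E ≠ 0 → E ⊆ G
  card_eq : ∀ {E}, w E ≠ 0 → #E = k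

/-- `I` is independent in the weighted hypergraph `w`. -/
def IsIndep (w : Finset α → ℝ) (I : Finset α) : Prop := ∀ E ⊆ I, w E = 0

lemma IsUniformOn.add (hw : IsUniformOn G k w) (hw' : IsUniformOn G k w') :
    IsUniformOn G k (w + w') := by
  have hsupp : ∀ {E}, (w + w') E ≠ 0 → w E ≠ 0 ∨ w' E ≠ 0 := fun {E} hE => by
    by_contra! h
    simp [h] at hE
  exact ⟨add_nonneg hw.nonneg hw'.nonneg, fun hE => (hsupp hE).elim hw.subset hw'.subset,
    fun hE => (hsupp hE).elim hw.card_eq hw'.card_eq⟩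

lemma IsUniformOn.smul (hw : IsUniformOn G k w) {c : ℝ} (hc : 0 ≤ c) :
    IsUniformOn G k (c • w) where
  nonneg := smul_nonneg hc hw.nonneg
  subset hE := hw.subset (right_ne_zero_of_mul hE)
  card_eq hE := hw.card_eq (right_ne_zero_of_mul hE)

lemma IsIndep.add {I : Finset α} (hI : IsIndep w I) (hI' : IsIndep w' I) : IsIndep (w + w') I :=
  fun E hE => by simp [hI E hE, hI' E hE]

variable [DecidableEq α] {𝒮 : Finset (Finset α)}

/-- The weighted link of the vertex `u`: a set `F` not containing `u` gets the weight of
`F ∪ {u}`. -/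
noncomputable def link (w : Finset α → ℝ) (u : α) :
    Finset α → ℝ := fun F => if u ∈ F then 0 else w (insert u F)

/-- The weighted hypergraph `w` with all edges that contain a member of `𝒮` removed. -/
noncomputable def avoiding (w : Finset α → ℝ)
    (𝒮 : Finset (Finset α)) : Finset α → ℝ := fun E => if ∃ T ∈ 𝒮, T ⊆ E then 0 else w E

lemma link_nonneg (hw : 0 ≤ w) (v : α) : 0 ≤ link w v := fun F => by
  unfold link; split_ifs; exacts [le_rfl, hw (insert v F)]

lemma avoiding_nonneg (hw : 0 ≤ w) (𝒮 : Finset (Finset α)) : 0 ≤ avoiding w 𝒮 := fun E => by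
  unfold avoiding; split_ifs; exacts [le_rfl, hw E]

lemma avoiding_le (hw : 0 ≤ w) (𝒮 : Finset (Finset α)) : avoiding w 𝒮 ≤ w := fun E => by
  unfold avoiding; split_ifs; exacts [hw E, le_rfl]

lemma avoiding_eq_zero (h : w E = 0) : avoiding w 𝒮 E = 0 := by simp [avoiding, h]

lemma IsUniformOn.avoiding (hw : IsUniformOn G k w) (𝒮 : Finset (Finset α)) :
    IsUniformOn G k (avoiding w 𝒮) where
  nonneg := avoiding_nonneg hw.nonneg 𝒮
  subset hE := hw.subset fun h => hE (avoiding_eq_zero h)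
  card_eq hE := hw.card_eq fun h => hE (avoiding_eq_zero h)

lemma IsUniformOn.link (hw : IsUniformOn G (k + 1) w) (v : α) : IsUniformOn G k (link w v) where
  nonneg := link_nonneg hw.nonneg v
  subset {E} hE := by
    simp only [BoxCount.link, ne_eq, ite_eq_left_iff, not_forall, exists_prop] at hE
    exact (subset_insert v E).trans (hw.subset hE.2)
  card_eq {E} hE := by
    simp only [BoxCount.link, ne_eq, ite_eq_left_iff, not_forall, exists_prop] at hE
    have := hw.card_eq hE.2
    rwa [card_insert_of_notMem hE.1, Nat.add_right_cancel_iff] at this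

lemma IsIndep.link {I : Finset α} (hI : IsIndep w I) (hv : v ∈ I) : IsIndep (link w v) I :=
  fun E hE => by
    unfold BoxCount.link
    split_ifs
    exacts [rfl, hI _ (insert_subset hv hE)]

lemma IsIndep.avoiding {I : Finset α} (hI : IsIndep w I) : IsIndep (avoiding w 𝒮) I :=
  fun E hE => avoiding_eq_zero (hI E hE)

variable [Fintype α]

/-- The degree of `T` in the weighted hypergraph `w`. A weighted hypergraph is a function on all
finite sets, its edges being the support, so `deg w ∅` is the total weight. -/
noncomputable def deg (w : Finset α → ℝ)
    (T : Finset α) : ℝ := ∑ E with T ⊆ E, w E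

/-- All codegrees of `w` are within a factor `D` of what one expects after sampling vertices with
density `p`. The factor `p` on the left makes the vertex degrees at most `D`. -/
def IsBalanced (D p : ℝ) (w : Finset α → ℝ) : Prop :=
  ∀ T : Finset α, T.Nonempty → p * deg w T ≤ D * p ^ #T

lemma deg_nonneg (hw : 0 ≤ w) (T : Finset α) : 0 ≤ deg w T :=
  sum_nonneg fun E _ => hw E

lemma deg_mono (h : w ≤ w') (T : Finset α) : deg w T ≤ deg w' T :=
  sum_le_sum fun E _ => h E

lemma deg_zero (T : Finset α) : deg 0 T = 0 := sum_const_zero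

lemma deg_add (w w' : Finset α → ℝ) (T : Finset α) : deg (w + w') T = deg w T + deg w' T :=
  sum_add_distrib

lemma deg_sub (w w' : Finset α → ℝ) (T : Finset α) : deg (w - w') T = deg w T - deg w' T :=
  sum_sub_distrib ..

lemma deg_smul (c : ℝ) (w : Finset α → ℝ) (T : Finset α) : deg (c • w) T = c * deg w T :=
  (mul_sum ..).symm

lemma deg_empty (w : Finset α → ℝ) : deg w ∅ = ∑ E, w E := by simp [deg]

lemma deg_eq_zero (h : ∀ E, T ⊆ E → w E = 0) : deg w T = 0 :=
  sum_eq_zero fun E hE => h E (mem_filter.1 hE).2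

lemma sum_deg (w : Finset α → ℝ) (𝒮 : Finset (Finset α)) :
    ∑ T ∈ 𝒮, deg w T = ∑ E, #{T ∈ 𝒮 | T ⊆ E} * w E := by
  simp_rw [deg, sum_filter]
  rw [sum_comm]
  simp_rw [← sum_filter, sum_const, nsmul_eq_mul]

lemma sum_deg_univ (hw : ∀ E, w E ≠ 0 → #E = k) : ∑ T, deg w T = 2 ^ k * deg w ∅ := by
  rw [sum_deg, deg_empty, mul_sum]
  refine sum_congr rfl fun E _ => ?_
  by_cases h : w E = 0
  · simp [h]
  · rw [filter_subset_univ, card_powerset, hw E h]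
    norm_num

lemma deg_empty_le_sum_deg (hw : 0 ≤ w) (h : ∀ E, w E ≠ 0 → ∃ T ∈ 𝒮, T ⊆ E) :
    deg w ∅ ≤ ∑ T ∈ 𝒮, deg w T := by
  rw [sum_deg, deg_empty]
  refine sum_le_sum fun E _ => ?_
  by_cases hE : w E = 0
  · simp [hE]
  · obtain ⟨T, hT, hTE⟩ := h E hE
    refine le_mul_of_one_le_left (hw E) (mod_cast card_pos.2 ⟨T, mem_filter.2 ⟨hT, hTE⟩⟩)

lemma deg_link_of_mem (w : Finset α → ℝ) (h : v ∈ T) : deg (link w v) T = 0 :=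
  deg_eq_zero fun _ hE => if_pos (hE h)

lemma deg_link_of_notMem (w : Finset α → ℝ) (h : v ∉ T) :
    deg (link w v) T = deg w (insert v T) := by
  unfold deg link
  rw [sum_ite, sum_const_zero, zero_add, filter_filter]
  refine sum_nbij' (insert v) (erase · v) ?_ ?_ ?_ ?_ fun _ _ => rfl <;>
    simp +contextual [insert_subset_iff, subset_erase, h, subset_insert_iff_of_notMem]

lemma deg_avoiding_of_subset {S : Finset α} (hS : S ∈ 𝒮) (h : S ⊆ T) :
    deg (avoiding w 𝒮) T = 0 :=
  deg_eq_zero fun _ hE => if_pos ⟨S, hS, h.trans hE⟩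

lemma deg_sub_sum_deg_le_deg_avoiding (hw : 0 ≤ w) (𝒮 : Finset (Finset α)) :
    deg w ∅ - ∑ T ∈ 𝒮, deg w T ≤ deg (avoiding w 𝒮) ∅ := by
  have hle := avoiding_le hw 𝒮
  have hremoved : deg (w - avoiding w 𝒮) ∅ ≤ ∑ T ∈ 𝒮, deg (w - avoiding w 𝒮) T := by
    refine deg_empty_le_sum_deg (sub_nonneg.2 hle) fun E hE => ?_
    by_contra h
    simp [avoiding, h] at hE
  have : ∑ T ∈ 𝒮, deg (w - avoiding w 𝒮) T ≤ ∑ T ∈ 𝒮, deg w T :=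
    sum_le_sum fun T _ => deg_mono (sub_le_self w (avoiding_nonneg hw 𝒮)) T
  rw [deg_sub] at hremoved
  linarith

lemma IsBalanced.deg_insert_le (hw : IsBalanced D p w) (hp : 0 < p) (hv : v ∉ T) :
    deg w (insert v T) ≤ D * p ^ #T := by
  have := hw (insert v T) (insert_nonempty v T)
  rw [card_insert_of_notMem hv, pow_succ'] at this
  exact le_of_mul_le_mul_left (this.trans_eq (by ring)) hp

lemma IsBalanced.deg_singleton_le (hw : IsBalanced D p w) (hp : 0 < p) (v : α) :
    deg w {v} ≤ D := by
  simpa using hw.deg_insert_le hp (notMem_empty v)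

lemma IsBalanced.anti (hw : IsBalanced D p w) (hp : 0 ≤ p) (h : w' ≤ w) : IsBalanced D p w' :=
  fun T hT => (mul_le_mul_of_nonneg_left (deg_mono h T) hp).trans (hw T hT)

/-- Many vertices have degree above `τ`, since the weight is at most the sum of the degrees. -/
lemma deg_empty_le_of_deg_singleton_le {τ : ℝ} (hw : IsUniformOn G (k + 1) w)
    (hD : ∀ v, deg w {v} ≤ D) (hτ : 0 ≤ τ) :
    deg w ∅ ≤ τ * #G + D * (#G - #{v ∈ G | deg w {v} ≤ τ}) := by
  have hsum : deg w ∅ ≤ ∑ v ∈ G, deg w {v} := by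
    refine (deg_empty_le_sum_deg (𝒮 := G.map ⟨singleton, singleton_injective⟩) hw.nonneg
      fun E hE => ?_).trans_eq (sum_map ..)
    obtain ⟨v, hv⟩ := card_pos.1 (k.succ_pos.trans_eq (hw.card_eq hE).symm)
    exact ⟨{v}, mem_map_of_mem _ (hw.subset hE hv), singleton_subset_iff.2 hv⟩
  have hlow : ∑ v ∈ G with deg w {v} ≤ τ, deg w {v} ≤ #{v ∈ G | deg w {v} ≤ τ} * τ := by
    rw [← nsmul_eq_mul]
    exact sum_le_card_nsmul _ _ _ fun v hv => (mem_filter.1 hv).2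
  have hhigh : ∑ v ∈ G with ¬ deg w {v} ≤ τ, deg w {v} ≤ #{v ∈ G | ¬ deg w {v} ≤ τ} * D := by
    rw [← nsmul_eq_mul]
    exact sum_le_card_nsmul _ _ _ fun v _ => hD v
  have hcard : (#{v ∈ G | deg w {v} ≤ τ} + #{v ∈ G | ¬ deg w {v} ≤ τ} : ℝ) = #G := by
    exact_mod_cast card_filter_add_card_filter_not _
  have hle : (#{v ∈ G | deg w {v} ≤ τ} : ℝ) * τ ≤ #G * τ := by
    gcongr
    exact filter_subset _ _
  rw [← sum_filter_add_sum_filter_not G (fun v => deg w {v} ≤ τ)] at hsum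
  rw [← eq_sub_iff_add_eq'] at hcard
  rw [hcard] at hhigh
  linarith

/-- The sets whose degree in `H` exceeds the bound of a balanced hypergraph. -/
noncomputable def saturated (H : Finset α → ℝ) (D p : ℝ) : Finset (Finset α) :=
  {T | T.Nonempty ∧ D * p ^ #T < deg H T}

/-- The edges of `w` still available once the vertices of `Y` have been selected and their links
added to `H`: those disjoint from `Y` that contain no saturated set. -/
noncomputable def available (w H : Finset α → ℝ) (Y : Finset α) (D p : ℝ) : Finset α → ℝ :=
  avoiding w (Y.map ⟨singleton, singleton_injective⟩ ∪ saturated H D p)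

lemma deg_available_of_mem {H : Finset α → ℝ} {Y : Finset α} (hv : v ∈ Y) (hT : v ∈ T) :
    deg (available w H Y D p) T = 0 :=
  deg_avoiding_of_subset (mem_union_left _ (mem_map_of_mem _ hv)) (singleton_subset_iff.2 hT)

lemma sum_deg_saturated_le {H : Finset α → ℝ} (hH : IsUniformOn G k H) (hw : IsBalanced D p w)
    (hp : 0 < p) : ∑ T ∈ saturated H D p, deg w T ≤ 2 ^ k * deg H ∅ / p := by
  rw [le_div_iff₀' hp, mul_sum, ← sum_deg_univ fun _ => hH.card_eq]
  calc ∑ T ∈ saturated H D p, p * deg w T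
      ≤ ∑ T ∈ saturated H D p, deg H T := sum_le_sum fun T hT => by
        obtain ⟨hne, hlt⟩ := (mem_filter.1 hT).2
        exact (hw T hne).trans hlt.le
    _ ≤ ∑ T, deg H T :=
        sum_le_sum_of_subset_of_nonneg (subset_univ _) fun T _ _ => deg_nonneg hH.nonneg T

/-- Few edges are lost: those meeting `Y` are paid by vertex degrees, and those containing a
saturated set by the degrees of `H`, whose sum is `2 ^ k` times the weight of `H`. -/
lemma le_deg_available {H : Finset α → ℝ} (hw : 0 ≤ w) (hbal : IsBalanced D p w)
    (hH : IsUniformOn G k H) (hp : 0 < p) (Y : Finset α) :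
    deg w ∅ - D * #Y - 2 ^ k * deg H ∅ / p ≤ deg (available w H Y D p) ∅ := by
  have hY : ∑ T ∈ Y.map ⟨singleton, singleton_injective⟩, deg w T ≤ D * #Y := by
    rw [sum_map, mul_comm, ← nsmul_eq_mul]
    exact sum_le_card_nsmul _ _ _ fun v _ => hbal.deg_singleton_le hp v
  have hunion := sum_union_inter (s₁ := Y.map ⟨singleton, singleton_injective⟩)
    (s₂ := saturated H D p) (f := deg w)
  have hinter := sum_nonneg fun T (_ : T ∈ Y.map ⟨singleton, singleton_injective⟩ ∩
    saturated H D p) => deg_nonneg hw T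
  have hsat := sum_deg_saturated_le hH hbal hp
  refine le_trans ?_ (deg_sub_sum_deg_le_deg_avoiding hw _)
  linarith

end Containers

section ContainerRound

variable {α : Type*} [Fintype α] [DecidableEq α] {w H : Finset α → ℝ} {G U Y : Finset α} {v : α}
  {k : ℕ} {D a p δ : ℝ}

/-- The input of one round of the container algorithm: a `(k + 1)`-uniform weighted hypergraph on
`G` which is balanced and has average degree of order `a`, for a sampling density `p` that is small
in terms of `a / D`. -/
structure IsRoundInput (G : Finset α) (k : ℕ) (D a p : ℝ) (w : Finset α → ℝ) : Prop where
  uniform : IsUniformOn G (k + 1) w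
  balanced : IsBalanced D p w
  le_deg_empty : a * #G ≤ deg w ∅
  pos : 0 < p
  le_one : p ≤ 1
  bound_pos : 0 < D
  mul_le : p * D ≤ a / 4

/-- The state of the round after the vertices of `Y` have been selected: `H` is the `k`-uniform
hypergraph accumulated from their links. -/
structure IsRoundState (G : Finset α) (k : ℕ) (D a p : ℝ) (Y : Finset α) (H : Finset α → ℝ) :
    Prop where
  uniform : IsUniformOn G k H
  deg_le : ∀ T : Finset α, T.Nonempty → deg H T ≤ 2 * D * p ^ #T
  card_le : a / 4 * #Y ≤ deg H ∅

lemma IsRoundInput.avg_pos (hw : IsRoundInput G k D a p w) : 0 < a := by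
  linarith [mul_pos hw.pos hw.bound_pos, hw.mul_le]

lemma IsRoundInput.available_uniform (hw : IsRoundInput G k D a p w) :
    IsUniformOn G (k + 1) (available w H Y D p) :=
  hw.uniform.avoiding _

lemma IsRoundInput.available_balanced (hw : IsRoundInput G k D a p w) :
    IsBalanced D p (available w H Y D p) :=
  hw.balanced.anti hw.pos.le (avoiding_le hw.uniform.nonneg _)

lemma isRoundState_empty (hD : 0 ≤ D) (hp : 0 ≤ p) : IsRoundState G k D a p ∅ 0 where
  uniform := ⟨le_rfl, by simp, by simp⟩
  deg_le T _ := by rw [deg_zero]; positivity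
  card_le := by simp [deg_zero]

lemma IsRoundState.insert (hw : IsRoundInput G k D a p w) (h : IsRoundState G k D a p Y H)
    (hvY : v ∉ Y) (hv : a / 4 ≤ deg (available w H Y D p) {v}) :
    IsRoundState G k D a p (insert v Y) (H + link (available w H Y D p) v) where
  uniform := h.uniform.add (hw.available_uniform.link v)
  deg_le T hT := by
    rw [deg_add]
    by_cases hvT : v ∈ T
    · rw [deg_link_of_mem _ hvT, add_zero]
      exact h.deg_le T hT
    rw [deg_link_of_notMem _ hvT]
    by_cases hsat : T ∈ saturated H D p
    · rw [available, deg_avoiding_of_subset (mem_union_right _ hsat) (subset_insert v T), add_zero]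
      exact h.deg_le T hT
    · have hHT : deg H T ≤ D * p ^ #T := by simpa [saturated, hT] using hsat
      linarith [(hw.available_balanced (H := H) (Y := Y)).deg_insert_le hw.pos hvT]
  card_le := by
    rw [deg_add, deg_link_of_notMem _ (notMem_empty v), card_insert_of_notMem hvY,
      insert_empty_eq]
    push_cast
    linarith [h.card_le]

lemma IsRoundState.card_lt (h : IsRoundState G k D a p Y H) (ha : 0 < a) (hp : 0 ≤ p)
    (hlight : deg H ∅ < a / 2 ^ (k + 3) * (p * #G)) : #Y < p * #G := by
  have hpow : (4 : ℝ) ≤ 2 ^ (k + 3) := by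
    rw [pow_add]
    linarith [one_le_pow₀ (one_le_two : (1 : ℝ) ≤ 2) (n := k)]
  refine lt_of_mul_lt_mul_left ?_ (by positivity : 0 ≤ a / 4)
  calc a / 4 * #Y ≤ deg H ∅ := h.card_le
    _ < a / 2 ^ (k + 3) * (p * #G) := hlight
    _ ≤ a / 4 * (p * #G) := by gcongr

lemma IsRoundState.half_le_deg_available (hw : IsRoundInput G k D a p w)
    (h : IsRoundState G k D a p Y H) (hlight : deg H ∅ < a / 2 ^ (k + 3) * (p * #G)) :
    a / 2 * #G ≤ deg (available w H Y D p) ∅ := by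
  have hp := hw.pos
  have hY : D * #Y ≤ a / 4 * #G :=
    calc D * #Y ≤ D * (p * #G) :=
          mul_le_mul_of_nonneg_left (h.card_lt hw.avg_pos hp.le hlight).le hw.bound_pos.le
      _ = p * D * #G := by ring
      _ ≤ a / 4 * #G := by gcongr; exact hw.mul_le
  have hH : 2 ^ k * deg H ∅ / p ≤ a / 8 * #G := by
    rw [div_le_iff₀ hp]
    calc 2 ^ k * deg H ∅ ≤ 2 ^ k * (a / 2 ^ (k + 3) * (p * #G)) := by gcongr
      _ = a / 8 * #G * p := by rw [pow_add]; field_simp; ring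
  have ha : 0 ≤ a * #G := mul_nonneg hw.avg_pos.le (Nat.cast_nonneg _)
  linarith [le_deg_available hw.uniform.nonneg hw.balanced h.uniform hp Y, hw.le_deg_empty]

lemma IsRoundState.card_low_degree_le (hw : IsRoundInput G k D a p w)
    (h : IsRoundState G k D a p Y H) (hlight : deg H ∅ < a / 2 ^ (k + 3) * (p * #G))
    (hδ : δ * D ≤ a / 4) :
    (#{v ∈ G | deg (available w H Y D p) {v} ≤ a / 4} : ℝ) ≤ (1 - δ) * #G := by
  have hlow := deg_empty_le_of_deg_singleton_le (τ := a / 4) (D := D)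
    (hw.available_uniform (H := H) (Y := Y)) (hw.available_balanced.deg_singleton_le hw.pos)
    (by linarith [hw.avg_pos])
  have hhalf := h.half_le_deg_available hw hlight
  have hδG : δ * D * #G ≤ a / 4 * #G := by gcongr
  refine le_of_mul_le_mul_left ?_ hw.bound_pos
  linarith

lemma IsRoundInput.subset_low_degree (hw : IsRoundInput G k D a p w)
    (hlow : ∀ v ∈ U, deg (available w H Y D p) {v} ≤ a / 4) {I : Finset α} (hIG : I ⊆ G)
    (hI : I ⊆ U ∪ Y) : I ⊆ {v ∈ G | deg (available w H Y D p) {v} ≤ a / 4} := by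
  refine fun v hv => mem_filter.2 ⟨hIG hv, ?_⟩
  rcases mem_union.1 (hI hv) with hvU | hvY
  · exact hlow v hvU
  · rw [deg_available_of_mem hvY (mem_singleton_self v)]
    linarith [hw.avg_pos]

lemma IsRoundState.isBalanced_inv_smul (h : IsRoundState G k D a p Y H) (hp : 0 < p) :
    IsBalanced (2 * D) p (p⁻¹ • H) := fun T hT => by
  rw [deg_smul, mul_inv_cancel_left₀ hp.ne']
  exact h.deg_le T hT

lemma one_add_pow_mul_inv_pow_add {p : ℝ} (hp : p ≠ 0) (m l : ℕ) (R : ℝ) :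
    (1 + p) ^ m * p⁻¹ ^ l * R + (1 + p) ^ m * p⁻¹ ^ (l + 1) * R =
      (1 + p) ^ (m + 1) * p⁻¹ ^ (l + 1) * R := by
  rw [pow_succ (1 + p), pow_succ p⁻¹]
  field_simp
  ring

/-- Vertices of `G` are queried as long as some unqueried one, in `U`, has degree above `a / 4` in
the available hypergraph; a queried vertex is selected if it belongs to `I`. The round stops either
when `H` is heavy, and the bound `R` for `k`-uniform hypergraphs applies, or when no vertex of high
degree remains, so that `I` lies in a small set, and the bound `Q` applies. At most `y` vertices are
selected; weighing a selection by `p⁻¹` bounds the number of branches. -/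
lemma card_le_of_isRoundState {Q R : ℝ} {y : ℕ} {𝓘 : Finset (Finset α)}
    (hw : IsRoundInput G k D a p w) (hδ : δ * D ≤ a / 4) (hy : p * #G ≤ y)
    (hind : ∀ I ∈ 𝓘, I ⊆ G ∧ IsIndep w I)
    (hQ : ∀ C ⊆ G, (#C : ℝ) ≤ (1 - δ) * #G → (#{I ∈ 𝓘 | I ⊆ C} : ℝ) ≤ Q) (hQR : Q ≤ R)
    (hR₀ : 0 ≤ R)
    (hR : ∀ 𝓙 ⊆ 𝓘, ∀ Y H, IsRoundState G k D a p Y H → a / 2 ^ (k + 3) * (p * #G) ≤ deg H ∅ →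
      (∀ I ∈ 𝓙, IsIndep H I) → (#𝓙 : ℝ) ≤ R)
    {𝓙 : Finset (Finset α)} (h𝓙 : 𝓙 ⊆ 𝓘) (h : IsRoundState G k D a p Y H)
    (hH : ∀ I ∈ 𝓙, IsIndep H I) (hU : ∀ I ∈ 𝓙, I ⊆ U ∪ Y) :
    (#𝓙 : ℝ) ≤ (1 + p) ^ #U * p⁻¹ ^ (y - #Y) * R := by
  have hp := hw.pos
  have hR_le : ∀ m l : ℕ, R ≤ (1 + p) ^ m * p⁻¹ ^ l * R := fun m l =>
    le_mul_of_one_le_left hR₀ <| one_le_mul_of_one_le_of_one_le (one_le_pow₀ (by linarith))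
      (one_le_pow₀ ((one_le_inv₀ hp).2 hw.le_one))
  induction U using Finset.strongInduction generalizing 𝓙 Y H with | H U ih => ?_
  rcases le_or_gt (a / 2 ^ (k + 3) * (p * #G)) (deg H ∅) with hheavy | hlight
  · exact (hR 𝓙 h𝓙 Y H h hheavy hH).trans (hR_le _ _)
  by_cases hlow : ∀ v ∈ U, deg (available w H Y D p) {v} ≤ a / 4
  · calc (#𝓙 : ℝ) ≤ #{I ∈ 𝓘 | I ⊆ {v ∈ G | deg (available w H Y D p) {v} ≤ a / 4}} :=
          Nat.cast_le.2 <| card_le_card fun I hI => mem_filter.2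
            ⟨h𝓙 hI, hw.subset_low_degree hlow (hind I (h𝓙 hI)).1 (hU I hI)⟩
      _ ≤ Q := hQ _ (filter_subset _ _) (h.card_low_degree_le hw hlight hδ)
      _ ≤ _ := hQR.trans (hR_le _ _)
  push Not at hlow
  obtain ⟨v, hvU, hv⟩ := hlow
  have hvY : v ∉ Y := fun hvY => by
    rw [deg_available_of_mem hvY (mem_singleton_self v)] at hv
    linarith [hw.avg_pos]
  have hYy : #Y + 1 ≤ y := by
    exact_mod_cast (h.card_lt hw.avg_pos hp.le hlight).trans_le hy
  have hrejected : (#{I ∈ 𝓙 | v ∉ I} : ℝ) ≤ (1 + p) ^ #(U.erase v) * p⁻¹ ^ (y - #Y) * R := by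
    refine ih _ (erase_ssubset hvU) ((filter_subset _ _).trans h𝓙) h
      (fun I hI => hH I (mem_filter.1 hI).1) fun I hI => ?_
    obtain ⟨hI, hvI⟩ := mem_filter.1 hI
    rw [← erase_eq_of_notMem hvY, ← erase_union_distrib, subset_erase]
    exact ⟨hU I hI, hvI⟩
  have hselected :
      (#{I ∈ 𝓙 | v ∈ I} : ℝ) ≤ (1 + p) ^ #(U.erase v) * p⁻¹ ^ (y - #(insert v Y)) * R := by
    refine ih _ (erase_ssubset hvU) ((filter_subset _ _).trans h𝓙) (h.insert hw hvY hv.le)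
      (fun I hI => ?_) fun I hI => ?_
    · obtain ⟨hI, hvI⟩ := mem_filter.1 hI
      exact (hH I hI).add ((hind I (h𝓙 hI)).2.avoiding.link hvI)
    · rw [union_insert, ← insert_union, insert_erase hvU]
      exact hU I (mem_filter.1 hI).1
  have hsplit : (#𝓙 : ℝ) = #{I ∈ 𝓙 | v ∈ I} + #{I ∈ 𝓙 | v ∉ I} :=
    mod_cast (card_filter_add_card_filter_not _).symm
  obtain ⟨t, ht⟩ := Nat.exists_eq_add_of_le hYy
  rw [card_insert_of_notMem hvY, show y - (#Y + 1) = t by omega] at hselected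
  rw [show y - #Y = t + 1 by omega] at hrejected ⊢
  rw [hsplit, ← card_erase_add_one hvU]
  exact (add_le_add hselected hrejected).trans_eq (one_add_pow_mul_inv_pow_add hp.ne' _ _ _)

end ContainerRound

lemma card_le_of_container_zero {α : Type*} [Fintype α] [DecidableEq α] {G : Finset α}
    {w : Finset α → ℝ} {𝓘 : Finset (Finset α)} {a δ Q : ℝ} (ha : 0 < a) (hδ : δ ≤ 1)
    (hw : IsUniformOn G 0 w) (htot : a * #G ≤ deg w ∅) (hind : ∀ I ∈ 𝓘, I ⊆ G ∧ IsIndep w I)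
    (hQ : ∀ C ⊆ G, (#C : ℝ) ≤ (1 - δ) * #G → (#{I ∈ 𝓘 | I ⊆ C} : ℝ) ≤ Q) : (#𝓘 : ℝ) ≤ Q := by
  have hempty : ∀ I ∈ 𝓘, I ⊆ ∅ := by
    intro I hI
    have hdeg : deg w ∅ = 0 := deg_eq_zero fun E _ => by
      by_contra hE
      exact hE ((hind I hI).2 E (card_eq_zero.1 (hw.card_eq hE) ▸ empty_subset I))
    have hG : #G = 0 := by
      by_contra hG
      have : 0 < a * #G := by positivity
      linarith
    exact (hind I hI).1.trans (card_eq_zero.1 hG).subset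
  have := hQ ∅ (empty_subset G) (by simpa using mul_nonneg (sub_nonneg.2 hδ) (Nat.cast_nonneg #G))
  rwa [filter_true_of_mem hempty] at this

theorem card_le_of_container (k : ℕ) : ∀ D a : ℝ, 0 < D → 0 < a →
    ∃ p₀ δ : ℝ, 0 < p₀ ∧ p₀ ≤ 1 ∧ 0 < δ ∧ δ < 1 ∧
      ∀ {α : Type*} [Fintype α] [DecidableEq α] (G : Finset α) (w : Finset α → ℝ)
        (𝓘 : Finset (Finset α)) (p Q : ℝ) (y : ℕ), 0 < p → p ≤ p₀ → p * #G ≤ y →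
        IsUniformOn G k w → IsBalanced D p w → a * #G ≤ deg w ∅ →
        (∀ I ∈ 𝓘, I ⊆ G ∧ IsIndep w I) →
        (∀ C ⊆ G, (#C : ℝ) ≤ (1 - δ) * #G → (#{I ∈ 𝓘 | I ⊆ C} : ℝ) ≤ Q) →
        (#𝓘 : ℝ) ≤ ((1 + p) ^ #G * p⁻¹ ^ y) ^ k * Q := by
  induction k with
  | zero =>
    intro D a _ ha
    refine ⟨1, 1 / 2, one_pos, le_rfl, by norm_num, by norm_num, ?_⟩
    intro α _ _ G w 𝓘 p Q y _ _ _ hw _ htot hind hQ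
    simpa using card_le_of_container_zero ha (by norm_num) hw htot hind hQ
  | succ k ih =>
    intro D a hD ha
    obtain ⟨p₁, δ₁, hp₁, hp₁_le, hδ₁, hδ₁_lt, hcont⟩ :=
      ih (2 * D) (a / 2 ^ (k + 3)) (by positivity) (by positivity)
    refine ⟨min p₁ (a / (4 * D)), min δ₁ (a / (4 * D)), by positivity,
      (min_le_left _ _).trans hp₁_le, by positivity, (min_le_left _ _).trans_lt hδ₁_lt, ?_⟩
    intro α _ _ G w 𝓘 p Q y hp hp₀ hy hw hbal htot hind hQ
    have hp_le : p ≤ 1 := hp₀.trans ((min_le_left _ _).trans hp₁_le)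
    have hmul_le : ∀ {x : ℝ}, x ≤ a / (4 * D) → x * D ≤ a / 4 := fun hx => by
      rwa [le_div_iff₀ (by positivity), mul_left_comm, ← le_div_iff₀' (by norm_num)] at hx
    have hinput : IsRoundInput G k D a p w :=
      ⟨hw, hbal, htot, hp, hp_le, hD, hmul_le (hp₀.trans (min_le_right _ _))⟩
    have hQ₀ : 0 ≤ Q := (Nat.cast_nonneg _).trans <| hQ ∅ (empty_subset G) <| by
      have := (min_le_left δ₁ (a / (4 * D))).trans hδ₁_lt.le
      simpa using mul_nonneg (sub_nonneg.2 this) (Nat.cast_nonneg #G)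
    have hfac : 1 ≤ (1 + p) ^ #G * p⁻¹ ^ y :=
      one_le_mul_of_one_le_of_one_le (one_le_pow₀ (by linarith))
        (one_le_pow₀ ((one_le_inv₀ hp).2 hp_le))
    have hround := card_le_of_isRoundState (U := G) (R := ((1 + p) ^ #G * p⁻¹ ^ y) ^ k * Q)
      hinput (hmul_le (min_le_right δ₁ _)) hy hind hQ
      (le_mul_of_one_le_left hQ₀ (one_le_pow₀ hfac)) (by positivity) ?_ subset_rfl
      (isRoundState_empty hD.le hp.le) (fun _ _ _ _ => rfl)
      (by simpa using fun I hI => (hind I hI).1)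
    · simpa [pow_succ, mul_assoc, mul_comm, mul_left_comm] using hround
    · intro 𝓙 h𝓙 Y H hH hheavy hindH
      refine hcont G (p⁻¹ • H) 𝓙 p Q y hp (hp₀.trans (min_le_left _ _)) hy
        (hH.uniform.smul (by positivity)) (hH.isBalanced_inv_smul hp) ?_
        (fun I hI => ⟨(hind I (h𝓙 hI)).1, fun E hE => by simp [hindH I hI E hE]⟩)
        fun C hC hcard => ?_
      · rw [deg_smul, le_inv_mul_iff₀ hp]
        linarith
      · refine le_trans ?_ (hQ C hC (hcard.trans ?_))
        · exact_mod_cast card_le_card (filter_subset_filter _ h𝓙)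
        · gcongr
          exact min_le_left _ _

/-! ### Balanced weights or cheap covers -/

section Greedy

variable {α : Type*} [DecidableEq α] {𝓑 : Finset (Finset α)} {r : ℕ} {p : ℝ}

lemma exists_balanced_subfamily [Finite α] (h𝓑 : ∀ B ∈ 𝓑, #B = r) (hr : r ≠ 0) (hp : 0 < p)
    (hp₁ : p ≤ 1) :
    ∃ 𝓕 ⊆ 𝓑, (∀ T : Finset α, T.Nonempty → p ^ r * #{E ∈ 𝓕 | T ⊆ E} ≤ 2 * p ^ #T) ∧
      ∀ B ∈ 𝓑, ∃ T ⊆ B, T.Nonempty ∧ p ^ #T ≤ p ^ r * #{E ∈ 𝓕 | T ⊆ E} := by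
  obtain ⟨𝓕, ⟨h𝓕, hbal⟩, hmax⟩ := exists_maximal_of_wellFoundedGT
    (fun 𝓕 : Finset (Finset α) => 𝓕 ⊆ 𝓑 ∧
      ∀ T : Finset α, T.Nonempty → p ^ r * #{E ∈ 𝓕 | T ⊆ E} ≤ 2 * p ^ #T)
    ⟨∅, empty_subset _, fun T _ => by
      rw [filter_empty, card_empty, Nat.cast_zero, mul_zero]
      positivity⟩
  refine ⟨𝓕, h𝓕, hbal, fun B hB => ?_⟩
  by_cases hB𝓕 : B ∈ 𝓕
  · have hpos : 0 < #{E ∈ 𝓕 | B ⊆ E} := card_pos.2 ⟨B, mem_filter.2 ⟨hB𝓕, subset_rfl⟩⟩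
    refine ⟨B, subset_rfl, card_pos.1 (h𝓑 B hB ▸ Nat.pos_of_ne_zero hr), ?_⟩
    rw [h𝓑 B hB]
    exact le_mul_of_one_le_right (by positivity) (mod_cast hpos)
  have hviolated : ∃ T : Finset α, T.Nonempty ∧
      2 * p ^ #T < p ^ r * #{E ∈ insert B 𝓕 | T ⊆ E} := by
    by_contra! h
    exact hB𝓕 (hmax ⟨insert_subset hB h𝓕, h⟩ (subset_insert B 𝓕) (mem_insert_self B 𝓕))
  obtain ⟨T, hT, hlt⟩ := hviolated
  rw [filter_insert] at hlt
  split_ifs at hlt with hTB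
  · rw [card_insert_of_notMem fun h => hB𝓕 (mem_filter.1 h).1] at hlt
    push_cast at hlt
    have : p ^ r ≤ p ^ #T :=
      pow_le_pow_of_le_one hp.le hp₁ ((card_le_card hTB).trans_eq (h𝓑 B hB))
    exact ⟨T, hTB, hT, by linarith⟩
  · exact absurd (hbal T hT) (not_le.2 hlt)

variable [Fintype α]

lemma deg_ite_mem (𝓕 : Finset (Finset α)) (c : ℝ) (T : Finset α) :
    deg (fun E => if E ∈ 𝓕 then c else 0) T = c * #{E ∈ 𝓕 | T ⊆ E} := by
  rw [deg, ← sum_filter, sum_const, nsmul_eq_mul, mul_comm, filter_filter]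
  congr 3
  ext E
  simp [and_comm]

/-- Put weight `p ^ (r - 1)` on each edge of a maximal subfamily keeping it balanced. If the total
is small, then the sets whose degree is at least half the allowed value form a cheap cover, by
maximality. -/
theorem exists_isBalanced_or_cover (h𝓑 : ∀ B ∈ 𝓑, #B = r) (hr : r ≠ 0) (hp : 0 < p) (hp₁ : p ≤ 1)
    (x : ℝ) :
    (∃ w : Finset α → ℝ, 0 ≤ w ∧ (∀ E, w E ≠ 0 → E ∈ 𝓑) ∧ IsBalanced 2 p w ∧ x ≤ deg w ∅) ∨
    ∃ 𝒢 : Finset (Finset α), (∀ T ∈ 𝒢, T.Nonempty ∧ ∃ B ∈ 𝓑, T ⊆ B) ∧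
      (∀ B ∈ 𝓑, ∃ T ∈ 𝒢, T ⊆ B) ∧ ∑ T ∈ 𝒢, p ^ #T ≤ p * 2 ^ r * x := by
  obtain ⟨𝓕, h𝓕, hbal, hheavy⟩ := exists_balanced_subfamily h𝓑 hr hp hp₁
  set w : Finset α → ℝ := fun E => if E ∈ 𝓕 then p⁻¹ * p ^ r else 0 with hw_def
  have hw : 0 ≤ w := fun E => by
    simp only [hw_def]
    split_ifs <;> simp only [Pi.zero_apply, le_refl]
    positivity
  have hsupp : ∀ E, w E ≠ 0 → E ∈ 𝓕 := fun E hE => by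
    by_contra h
    exact hE (if_neg h)
  have hdeg : ∀ T, p * deg w T = p ^ r * #{E ∈ 𝓕 | T ⊆ E} := fun T => by
    rw [deg_ite_mem, mul_assoc, mul_inv_cancel_left₀ hp.ne']
  rcases le_or_gt x (deg w ∅) with hx | hx
  · exact Or.inl ⟨w, hw, fun E hE => h𝓕 (hsupp E hE), fun T hT => (hdeg T).trans_le (hbal T hT), hx⟩
  refine Or.inr ⟨({T | T.Nonempty ∧ p ^ #T ≤ p * deg w T} : Finset (Finset α)),
    fun T hT => ?_, fun B hB => ?_, ?_⟩
  · obtain ⟨hne, hle⟩ := (mem_filter.1 hT).2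
    refine ⟨hne, ?_⟩
    by_contra! h
    rw [deg_eq_zero fun E hE => by_contra fun hwE => h E (h𝓕 (hsupp E hwE)) hE, mul_zero] at hle
    exact absurd hle (not_le.2 (by positivity))
  · obtain ⟨T, hTB, hne, hle⟩ := hheavy B hB
    exact ⟨T, mem_filter.2 ⟨mem_univ T, hne, hle.trans_eq (hdeg T).symm⟩, hTB⟩
  · calc ∑ T with T.Nonempty ∧ p ^ #T ≤ p * deg w T, p ^ #T
        ≤ ∑ T with T.Nonempty ∧ p ^ #T ≤ p * deg w T, p * deg w T :=
          sum_le_sum fun T hT => (mem_filter.1 hT).2.2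
      _ ≤ ∑ T, p * deg w T := sum_le_sum_of_subset_of_nonneg (subset_univ _)
          fun T _ _ => mul_nonneg hp.le (deg_nonneg hw T)
      _ = p * 2 ^ r * deg w ∅ := by
          rw [← mul_sum, sum_deg_univ fun E hE => h𝓑 E (h𝓕 (hsupp E hE)), mul_assoc]
      _ ≤ p * 2 ^ r * x := by gcongr

end Greedy

/-! ### Boxes -/

section Boxes

variable {X Z : Type*} [DecidableEq X] [DecidableEq Z] {d : ℕ}

/-- The edge `{g (j, ε j) : j}` of the box with vertex pairs `g (j, false)`, `g (j, true)`. -/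
def boxEdge (g : Fin d × Bool → X) (ε : Fin d → Bool) : Finset X :=
  univ.image fun j => g (j, ε j)

/-- The edge set of the box, i.e. the copy of `K_{2,…,2}^{(d)}`, with vertices given by `g`. -/
def box (g : Fin d × Bool → X) : Finset (Finset X) :=
  univ.image (boxEdge g)

/-- `E` contains a box: the analogue of `HasBox` on an arbitrary vertex type. -/
def ContainsBox (d : ℕ) (E : Finset (Finset X)) : Prop :=
  ∃ g : Fin d × Bool → X, Function.Injective g ∧ box g ⊆ E

/-- The indices of the vertex pairs of the box `g` with both vertices in `V`. -/
def fullPairs (g : Fin d × Bool → X) (V : Finset X) : Finset (Fin d) :=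
  {j | g (j, false) ∈ V ∧ g (j, true) ∈ V}

variable {g : Fin d × Bool → X}

lemma mem_boxEdge (hg : Function.Injective g) {ε : Fin d → Bool} {j : Fin d} {β : Bool} :
    g (j, β) ∈ boxEdge g ε ↔ ε j = β := by
  simp [boxEdge, hg.eq_iff]

lemma apply_mem_boxEdge (g : Fin d × Bool → X) (ε : Fin d → Bool) (j : Fin d) :
    g (j, ε j) ∈ boxEdge g ε :=
  mem_image_of_mem _ (mem_univ j)

lemma boxEdge_injective (hg : Function.Injective g) : Function.Injective (boxEdge g) :=
  fun _ ε' h => funext fun j => (mem_boxEdge hg).1 (h ▸ apply_mem_boxEdge g ε' j)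

lemma card_box (hg : Function.Injective g) : #(box g) = 2 ^ d := by
  rw [box, card_image_of_injective _ (boxEdge_injective hg)]
  simp

lemma card_boxEdge (hg : Function.Injective g) (ε : Fin d → Bool) : #(boxEdge g ε) = d := by
  rw [boxEdge, card_image_of_injective _ fun i j h => (Prod.mk.inj (hg h)).1, card_fin]

lemma box_comp (f : X → Z) (g : Fin d × Bool → X) :
    box (f ∘ g) = (box g).image fun e => e.image f := by
  unfold box boxEdge
  simp [image_image, Function.comp_def]

lemma add_card_fullPairs_le {V : Finset X} {ε : Fin d → Bool} (hg : Function.Injective g)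
    (hV : boxEdge g ε ⊆ V) : d + #(fullPairs g V) ≤ #V := by
  have hdisj : Disjoint (boxEdge g ε) ((fullPairs g V).image fun j => g (j, !ε j)) := by
    simp [disjoint_right, mem_boxEdge hg]
  have hopp : (fullPairs g V).image (fun j => g (j, !ε j)) ⊆ V := by
    refine image_subset_iff.2 fun j hj => ?_
    obtain ⟨hfalse, htrue⟩ := (mem_filter.1 hj).2
    cases ε j
    exacts [htrue, hfalse]
  calc d + #(fullPairs g V)
      = #(boxEdge g ε) + #((fullPairs g V).image fun j => g (j, !ε j)) := by
        rw [card_boxEdge hg, card_image_of_injective _ fun i j h => (Prod.mk.inj (hg h)).1]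
    _ = #(boxEdge g ε ∪ (fullPairs g V).image fun j => g (j, !ε j)) :=
        (card_union_of_disjoint hdisj).symm
    _ ≤ #V := card_le_card (union_subset hV hopp)

/-- An edge of the box inside `V` is determined by its trace on the full pairs. -/
lemma card_le_two_pow_card_fullPairs {V : Finset X} {T : Finset (Finset X)}
    (hg : Function.Injective g) (hT : T ⊆ box g) (hV : ∀ e ∈ T, e ⊆ V) :
    #T ≤ 2 ^ #(fullPairs g V) := by
  rw [← card_powerset]
  refine card_le_card_of_injOn (fun e => {j ∈ fullPairs g V | g (j, true) ∈ e})
    (fun e _ => mem_coe.2 (mem_powerset.2 (filter_subset _ _))) fun e he e' he' htrace => ?_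
  obtain ⟨ε, -, rfl⟩ := mem_image.1 (hT he)
  obtain ⟨ε', -, rfl⟩ := mem_image.1 (hT he')
  congr 1
  funext j
  by_contra hne
  have hj := hV _ he (apply_mem_boxEdge g ε j)
  have hj' := hV _ he' (apply_mem_boxEdge g ε' j)
  have hfull : j ∈ fullPairs g V := by
    rw [fullPairs, mem_filter_univ]
    cases hε : ε j <;> cases hε' : ε' j <;> simp_all
  have := Finset.ext_iff.1 htrace j
  simp only [mem_filter, hfull, true_and, mem_boxEdge hg] at this
  exact hne (Bool.eq_iff_iff.2 this)

lemma exists_le_card_sup_of_subset_box {T : Finset (Finset X)} (hg : Function.Injective g)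
    (hne : T.Nonempty) (hT : T ⊆ box g) : ∃ j ≤ d, d + j ≤ #(T.sup id) ∧ #T ≤ 2 ^ j := by
  obtain ⟨e, he⟩ := hne
  obtain ⟨ε, -, rfl⟩ := mem_image.1 (hT he)
  exact ⟨#(fullPairs g (T.sup id)), (card_le_univ _).trans_eq (Fintype.card_fin d),
    add_card_fullPairs_le hg (le_sup (f := id) he),
    card_le_two_pow_card_fullPairs hg hT fun e he => le_sup (f := id) he⟩

lemma hasBox_iff_containsBox {n : ℕ} {E : Finset (Finset (Fin n))} :
    HasBox d n E ↔ ContainsBox d E := by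
  constructor
  · rintro ⟨a, b, hinj, hE⟩
    exact ⟨_, hinj, image_subset_iff.2 fun ε _ => hE ε⟩
  · rintro ⟨g, hg, hE⟩
    have hg_eq : (fun p : Fin d × Bool => if p.2 then g (p.1, true) else g (p.1, false)) = g := by
      funext ⟨j, β⟩
      cases β <;> rfl
    refine ⟨fun j => g (j, false), fun j => g (j, true), hg_eq.symm ▸ hg, fun ε => ?_⟩
    have hedge : (fun j => if ε j then g (j, true) else g (j, false)) = fun j => g (j, ε j) :=
      funext fun j => congrFun hg_eq (j, ε j)
    rw [hedge]
    exact image_subset_iff.1 hE ε (mem_univ ε)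

lemma card_le_exBox_fin {n : ℕ} {E : Finset (Finset (Fin n))} (hd : ∀ e ∈ E, #e = d)
    (hE : ¬ ContainsBox d E) : #E ≤ exBox d n := by
  refine le_csSup ⟨Fintype.card (Finset (Fin n)), ?_⟩ ⟨E, hd, hasBox_iff_containsBox.not.2 hE, rfl⟩
  rintro _ ⟨F, -, -, rfl⟩
  exact card_le_univ F

lemma card_le_exBox {E : Finset (Finset X)} {R : Finset X} (hR : ∀ e ∈ E, e ⊆ R)
    (hd : ∀ e ∈ E, #e = d) (hE : ¬ ContainsBox d E) : #E ≤ exBox d #R := by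
  let f : Fin #R ↪ X := R.equivFin.symm.toEmbedding.trans (Function.Embedding.subtype _)
  have hf : univ.map f = R := by
    ext x
    refine ⟨fun hx => ?_, fun hx => mem_map.2 ⟨R.equivFin ⟨x, hx⟩, by simp [f]⟩⟩
    obtain ⟨i, -, rfl⟩ := mem_map.1 hx
    exact (R.equivFin.symm i).2
  have hsub : E ⊆ ({e | e.image f ∈ E} : Finset (Finset (Fin #R))).image (image f) := by
    intro e he
    obtain ⟨e', -, rfl⟩ := subset_map_iff.1 ((hR e he).trans_eq hf.symm)
    rw [map_eq_image] at he ⊢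
    exact mem_image_of_mem _ (mem_filter.2 ⟨mem_univ _, he⟩)
  refine ((card_le_card hsub).trans card_image_le).trans (card_le_exBox_fin (fun e he => ?_) ?_)
  · rw [← card_image_of_injective e f.injective]
    exact hd _ (mem_filter.1 he).2
  · rintro ⟨g, hg, hbox⟩
    refine hE ⟨f ∘ g, f.injective.comp hg, ?_⟩
    rw [box_comp]
    exact image_subset_iff.2 fun e he => (mem_filter.1 (hbox he)).2

end Boxes

/-! ### Deletion in a random vertex subset -/

section Sampling

/-- The probability that a uniformly random `m`-element subset of an `n`-element set contains a
given set of `v` elements. -/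
noncomputable def inclusionProb (n m v : ℕ) : ℝ :=
  m.descFactorial v / n.descFactorial v

variable {n m : ℕ}

lemma inclusionProb_nonneg (n m v : ℕ) : 0 ≤ inclusionProb n m v := by
  unfold inclusionProb
  positivity

lemma inclusionProb_zero (n m : ℕ) : inclusionProb n m 0 = 1 := by
  simp [inclusionProb]

lemma inclusionProb_succ (n m v : ℕ) :
    inclusionProb n m (v + 1) = (m - v : ℕ) / (n - v : ℕ) * inclusionProb n m v := by
  rw [inclusionProb, Nat.descFactorial_succ, Nat.descFactorial_succ, Nat.cast_mul, Nat.cast_mul,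
    mul_div_mul_comm, inclusionProb]

lemma inclusionProb_succ_le (hmn : m ≤ n) (v : ℕ) :
    inclusionProb n m (v + 1) ≤ m / n * inclusionProb n m v := by
  rw [inclusionProb_succ]
  refine mul_le_mul_of_nonneg_right ?_ (inclusionProb_nonneg n m v)
  rcases le_or_gt m v with hv | hv
  · rw [Nat.sub_eq_zero_of_le hv, Nat.cast_zero, zero_div]
    positivity
  have hvm : (v : ℝ) < m := mod_cast hv
  have hmn' : (m : ℝ) ≤ n := mod_cast hmn
  rw [Nat.cast_sub hv.le, Nat.cast_sub (hv.le.trans hmn),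
    div_le_div_iff₀ (by linarith) (by linarith [v.cast_nonneg (α := ℝ)])]
  nlinarith [v.cast_nonneg (α := ℝ)]

lemma inclusionProb_add_le (hmn : m ≤ n) (v j : ℕ) :
    inclusionProb n m (v + j) ≤ (m / n : ℝ) ^ j * inclusionProb n m v := by
  induction j with
  | zero => simp
  | succ j ih =>
    calc inclusionProb n m (v + j + 1) ≤ m / n * inclusionProb n m (v + j) :=
          inclusionProb_succ_le hmn _
      _ ≤ m / n * ((m / n : ℝ) ^ j * inclusionProb n m v) := by gcongr
      _ = (m / n : ℝ) ^ (j + 1) * inclusionProb n m v := by ring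

lemma pow_le_inclusionProb (hmn : m ≤ n) {v : ℕ} (hv : 2 * v ≤ m) :
    (m / (2 * n) : ℝ) ^ v ≤ inclusionProb n m v := by
  induction v with
  | zero => simp [inclusionProb_zero]
  | succ v ih =>
    have hvm : 2 * ((v : ℝ) + 1) ≤ m := mod_cast hv
    have hmn' : (m : ℝ) ≤ n := mod_cast hmn
    have hratio : (m / (2 * n) : ℝ) ≤ (m - v : ℕ) / (n - v : ℕ) := by
      rw [Nat.cast_sub (by lia), Nat.cast_sub (by lia),
        div_le_div_iff₀ (by linarith [v.cast_nonneg (α := ℝ)])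
          (by linarith [v.cast_nonneg (α := ℝ)])]
      nlinarith [v.cast_nonneg (α := ℝ)]
    rw [inclusionProb_succ, pow_succ']
    exact mul_le_mul hratio (ih (by lia)) (by positivity) (by positivity)

lemma choose_mul_inclusionProb {v : ℕ} (hv : v ≤ n) :
    n.choose m * inclusionProb n m v = if v ≤ m then ((n - v).choose (m - v) : ℝ) else 0 := by
  split_ifs with hvm
  · have hchoose : (n.choose v : ℝ) ≠ 0 := mod_cast (Nat.choose_pos hv).ne'
    have hfact : (v.factorial : ℝ) ≠ 0 := mod_cast v.factorial_ne_zero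
    rw [inclusionProb, Nat.descFactorial_eq_factorial_mul_choose,
      Nat.descFactorial_eq_factorial_mul_choose, Nat.cast_mul, Nat.cast_mul,
      mul_div_mul_left _ _ hfact, ← mul_div_assoc, div_eq_iff hchoose, mul_comm _ (n.choose v : ℝ)]
    exact mod_cast Nat.choose_mul hvm
  · rw [inclusionProb, Nat.descFactorial_eq_zero_iff_lt.2 (not_le.1 hvm), Nat.cast_zero, zero_div,
      mul_zero]

variable {X : Type*} [DecidableEq X] {d : ℕ} {G : Finset (Finset X)}
  {𝒢 : Finset (Finset (Finset X))} {p : ℝ}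

/-- Deleting from `G` one edge of each member of the cover `𝒢` inside `R` destroys all boxes
inside `R`. -/
lemma card_filter_subset_le_exBox_add (hG : ∀ e ∈ G, #e = d) (hne : ∀ T ∈ 𝒢, T.Nonempty)
    (hcov : ∀ g : Fin d × Bool → X, Function.Injective g → box g ⊆ G → ∃ T ∈ 𝒢, T ⊆ box g)
    (R : Finset X) : #{e ∈ G | e ⊆ R} ≤ exBox d #R + #{T ∈ 𝒢 | T.sup id ⊆ R} := by
  choose! c hc using hne
  set deleted := {T ∈ 𝒢 | T.sup id ⊆ R}.image c
  have hfree : ¬ ContainsBox d ({e ∈ G | e ⊆ R} \ deleted) := by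
    rintro ⟨g, hg, hbox⟩
    have hmem : ∀ e ∈ box g, e ∈ G ∧ e ⊆ R := fun e he => mem_filter.1 (mem_sdiff.1 (hbox he)).1
    obtain ⟨T, hT, hTg⟩ := hcov g hg fun e he => (hmem e he).1
    have hTR : T.sup id ⊆ R := Finset.sup_le fun e he => (hmem e (hTg he)).2
    exact (mem_sdiff.1 (hbox (hTg (hc T hT)))).2 (mem_image_of_mem c (mem_filter.2 ⟨hT, hTR⟩))
  calc #{e ∈ G | e ⊆ R} ≤ #({e ∈ G | e ⊆ R} \ deleted) + #deleted :=
        Nat.sub_le_iff_le_add.1 (le_card_sdiff _ _)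
    _ ≤ exBox d #R + #{T ∈ 𝒢 | T.sup id ⊆ R} :=
        add_le_add (card_le_exBox (fun e he => (mem_filter.1 (mem_sdiff.1 he).1).2)
          (fun e he => hG e (mem_filter.1 (mem_sdiff.1 he).1).1) hfree) card_image_le

lemma mul_inclusionProb_sup_le {T : Finset (Finset X)} {g : Fin d × Bool → X} (hmn : m ≤ n)
    (hg : Function.Injective g) (hne : T.Nonempty) (hT : T ⊆ box g) (hp : 0 ≤ p) (hp₁ : p ≤ 1)
    (hpm : ∀ j ≤ d, (m / n : ℝ) ^ j * p ≤ p ^ 2 ^ j) :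
    p * inclusionProb n m #(T.sup id) ≤ p ^ #T * inclusionProb n m d := by
  obtain ⟨j, hj, hdj, hTj⟩ := exists_le_card_sup_of_subset_box hg hne hT
  obtain ⟨i, hi⟩ := Nat.exists_eq_add_of_le hdj
  have hmn₁ : (m / n : ℝ) ≤ 1 := div_le_one_of_le₀ (mod_cast hmn) n.cast_nonneg
  have hd := inclusionProb_nonneg n m d
  calc p * inclusionProb n m #(T.sup id) = p * inclusionProb n m (d + (j + i)) := by
        rw [hi, add_assoc]
    _ ≤ p * ((m / n : ℝ) ^ (j + i) * inclusionProb n m d) := by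
        gcongr
        exact inclusionProb_add_le hmn _ _
    _ ≤ p * ((m / n : ℝ) ^ j * inclusionProb n m d) := by
        gcongr p * (?_ * _)
        exact pow_le_pow_of_le_one (by positivity) hmn₁ (Nat.le_add_right j i)
    _ = (m / n : ℝ) ^ j * p * inclusionProb n m d := by ring
    _ ≤ p ^ #T * inclusionProb n m d := by
        gcongr
        exact (hpm j hj).trans (pow_le_pow_of_le_one hp hp₁ hTj)

variable [Fintype X]

lemma card_powersetCard_filter_superset (V : Finset X) (m : ℕ) :
    (#{R ∈ powersetCard m univ | V ⊆ R} : ℝ) =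
      (Fintype.card X).choose m * inclusionProb (Fintype.card X) m #V := by
  rw [choose_mul_inclusionProb (card_le_univ V)]
  split_ifs with hV
  · rw [card_filter_powersetCard_subset V univ m (subset_univ V) hV, card_univ]
  · rw [Nat.cast_eq_zero, card_eq_zero, filter_eq_empty_iff]
    exact fun R hR hVR => hV ((card_le_card hVR).trans_eq (mem_powersetCard.1 hR).2)

lemma sum_powersetCard_card_filter_subset {ι : Type*} (s : Finset ι) (V : ι → Finset X) (m : ℕ) :
    ∑ R ∈ powersetCard m univ, (#{i ∈ s | V i ⊆ R} : ℝ) =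
      (Fintype.card X).choose m * ∑ i ∈ s, inclusionProb (Fintype.card X) m #(V i) := by
  have hcount := sum_card_bipartiteAbove_eq_sum_card_bipartiteBelow (s := s)
    (t := powersetCard m univ) fun i R => V i ⊆ R
  simp only [bipartiteAbove, bipartiteBelow] at hcount
  rw [← Nat.cast_sum, ← hcount, mul_sum, Nat.cast_sum]
  exact sum_congr rfl fun i _ => card_powersetCard_filter_superset (V i) m

lemma card_mul_inclusionProb_le_exBox_add (hm : m ≤ Fintype.card X) (hG : ∀ e ∈ G, #e = d)
    (hne : ∀ T ∈ 𝒢, T.Nonempty)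
    (hcov : ∀ g : Fin d × Bool → X, Function.Injective g → box g ⊆ G → ∃ T ∈ 𝒢, T ⊆ box g) :
    #G * inclusionProb (Fintype.card X) m d ≤
      exBox d m + ∑ T ∈ 𝒢, inclusionProb (Fintype.card X) m #(T.sup id) := by
  set n := Fintype.card X
  have hpos : (0 : ℝ) < n.choose m := mod_cast Nat.choose_pos hm
  have hcard : (n.choose m : ℝ) = #(powersetCard m (univ : Finset X)) := by
    rw [card_powersetCard, card_univ]
  refine le_of_mul_le_mul_left ?_ hpos
  calc n.choose m * (#G * inclusionProb n m d)
      = ∑ R ∈ powersetCard m univ, (#{e ∈ G | e ⊆ R} : ℝ) := by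
        rw [sum_powersetCard_card_filter_subset, sum_congr rfl fun e he => by rw [hG e he],
          sum_const, nsmul_eq_mul]
    _ ≤ ∑ R ∈ powersetCard m univ, ((exBox d m : ℝ) + #{T ∈ 𝒢 | T.sup id ⊆ R}) := by
        refine sum_le_sum fun R hR => ?_
        rw [← (mem_powersetCard.1 hR).2]
        exact mod_cast card_filter_subset_le_exBox_add hG hne hcov R
    _ = n.choose m * (exBox d m + ∑ T ∈ 𝒢, inclusionProb n m #(T.sup id)) := by
        rw [sum_add_distrib, sum_const, nsmul_eq_mul, ← hcard,
          sum_powersetCard_card_filter_subset, mul_add]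

/-- In a random `m`-set of vertices the expected number of members of a cheap cover of the boxes is
at most half the expected number of edges of `G`, and deleting one edge from each such member leaves
a box-free hypergraph. -/
theorem card_mul_le_exBox_of_cover (hmn : m ≤ Fintype.card X) (hdm : 2 * d ≤ m)
    (hG : ∀ e ∈ G, #e = d)
    (h𝒢 : ∀ T ∈ 𝒢, T.Nonempty ∧ ∃ g : Fin d × Bool → X, Function.Injective g ∧ T ⊆ box g)
    (hcov : ∀ g : Fin d × Bool → X, Function.Injective g → box g ⊆ G → ∃ T ∈ 𝒢, T ⊆ box g)
    (hp : 0 < p) (hp₁ : p ≤ 1)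
    (hpm : ∀ j ≤ d, (m / Fintype.card X : ℝ) ^ j * p ≤ p ^ 2 ^ j)
    (hcost : ∑ T ∈ 𝒢, p ^ #T ≤ p * (#G / 2)) :
    #G / 2 * (m / (2 * Fintype.card X)) ^ d ≤ (exBox d m : ℝ) := by
  set n := Fintype.card X
  have hcover : ∑ T ∈ 𝒢, inclusionProb n m #(T.sup id) ≤ #G / 2 * inclusionProb n m d := by
    refine le_of_mul_le_mul_left ?_ hp
    calc p * ∑ T ∈ 𝒢, inclusionProb n m #(T.sup id) ≤ ∑ T ∈ 𝒢, p ^ #T * inclusionProb n m d := by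
          rw [mul_sum]
          refine sum_le_sum fun T hT => ?_
          obtain ⟨hne, g, hg, hTg⟩ := h𝒢 T hT
          exact mul_inclusionProb_sup_le hmn hg hne hTg hp.le hp₁ hpm
      _ ≤ p * (#G / 2) * inclusionProb n m d := by
          rw [← sum_mul]
          exact mul_le_mul_of_nonneg_right hcost (inclusionProb_nonneg n m d)
      _ = p * (#G / 2 * inclusionProb n m d) := mul_assoc _ _ _
  have hexpected := card_mul_inclusionProb_le_exBox_add hmn hG (fun T hT => (h𝒢 T hT).1) hcov
  have hlower := mul_le_mul_of_nonneg_left (pow_le_inclusionProb hmn hdm)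
    (by positivity : (0 : ℝ) ≤ #G / 2)
  linarith

end Sampling

/-! ### Boxes in the graph of a random multilinear form -/

lemma card_fiber_mul_card {A B : Type*} [AddGroup A] [AddGroup B] [Fintype A] [Fintype B]
    [DecidableEq B] (f : A →+ B) (hf : Function.Surjective f) (b : B) :
    #{a | f a = b} * Fintype.card B = Fintype.card A := by
  calc #{a | f a = b} * Fintype.card B = ∑ b' : B, #{a | f a = b'} := by
        rw [sum_congr rfl fun b' _ =>
          AddMonoidHom.card_fiber_eq_of_mem_range f (hf b') (hf b), sum_const, smul_eq_mul,
          mul_comm, card_univ]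
    _ = Fintype.card A := (card_eq_sum_card_fiberwise fun _ _ => mem_univ _).symm

section MultilinearForms

variable {F η ι κ : Type*} [Field F] [Fintype ι]

lemma exists_dotProduct_eq_ite [Finite κ] [DecidableEq κ] {u : κ → ι → F}
    (hu : LinearIndependent F u) :
    ∃ φ : κ → ι → F, ∀ k k', φ k ⬝ᵥ u k' = if k = k' then 1 else 0 := by
  classical
  cases nonempty_fintype κ
  obtain ⟨g, hg⟩ := (Fintype.linearCombination F u).exists_leftInverse_of_injective
    (LinearMap.ker_eq_bot.2 hu.fintypeLinearCombination_injective)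
  refine ⟨LinearMap.toMatrix' g, fun k k' => ?_⟩
  have hgu : g (u k') = Pi.single k' 1 := by simpa using LinearMap.congr_fun hg (Pi.single k' 1)
  calc LinearMap.toMatrix' g k ⬝ᵥ u k' = g (u k') k :=
        congrFun (LinearMap.toMatrix'_mulVec g (u k')) k
    _ = if k = k' then 1 else 0 := by rw [hgu, Pi.single_apply]

variable [Fintype η] [DecidableEq η]

/-- The multilinear form on `(F ^ ι) ^ η` with coefficient tensor `c`. -/
def form (c : (η → ι) → F) (v : η → ι → F) : F :=
  ∑ J, c J * ∏ i, v i (J i)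

lemma form_zero_left (v : η → ι → F) : form 0 v = 0 := by
  simp [form]

lemma form_add_left (c c' : (η → ι) → F) (v : η → ι → F) :
    form (c + c') v = form c v + form c' v := by
  simp [form, add_mul, sum_add_distrib]

lemma form_eq_zero_of_apply_eq_zero (c : (η → ι) → F) {v : η → ι → F} {i : η} (hi : v i = 0) :
    form c v = 0 :=
  sum_eq_zero fun J _ => by rw [prod_eq_zero (mem_univ i) (congrFun hi (J i)), mul_zero]

variable [Fintype κ]

lemma form_sum_smul (c : (η → ι) → F) (l : η → κ → F) (u : η → κ → ι → F) :
    form c (fun i => ∑ k, l i k • u i k) =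
      ∑ σ : η → κ, (∏ i, l i (σ i)) * form c (fun i => u i (σ i)) := by
  simp only [form, Finset.sum_apply, Pi.smul_apply, smul_eq_mul, Fintype.prod_sum, mul_sum]
  rw [sum_comm]
  refine sum_congr rfl fun σ _ => sum_congr rfl fun J _ => ?_
  rw [prod_mul_distrib, mul_left_comm]

lemma form_sum_smul_of_forall_eq_one {c : (η → ι) → F} {u : η → κ → ι → F}
    (h : ∀ σ : η → κ, form c (fun i => u i (σ i)) = 1) (l : η → κ → F) :
    form c (fun i => ∑ k, l i k • u i k) = ∏ i, ∑ k, l i k := by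
  rw [form_sum_smul, Fintype.prod_sum]
  exact sum_congr rfl fun σ _ => by rw [h, mul_one]

lemma form_sum_mul_prod (y : (η → κ) → F) (φ : η → κ → ι → F) (v : η → ι → F) :
    form (fun J => ∑ σ, y σ * ∏ i, φ i (σ i) (J i)) v = ∑ σ, y σ * ∏ i, φ i (σ i) ⬝ᵥ v i := by
  simp only [form, dotProduct, Fintype.prod_sum, sum_mul, mul_sum]
  rw [sum_comm]
  refine sum_congr rfl fun σ _ => sum_congr rfl fun J _ => ?_
  rw [prod_mul_distrib, mul_assoc]

omit [Fintype κ] in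
lemma exists_form_eq [Finite κ] {u : η → κ → ι → F} (hu : ∀ i, LinearIndependent F (u i))
    (y : (η → κ) → F) : ∃ c : (η → ι) → F, ∀ σ, form c (fun i => u i (σ i)) = y σ := by
  classical
  cases nonempty_fintype κ
  choose φ hφ using fun i => exists_dotProduct_eq_ite (hu i)
  refine ⟨fun J => ∑ σ, y σ * ∏ i, φ i (σ i) (J i), fun τ => ?_⟩
  rw [form_sum_mul_prod]
  simp [hφ, Fintype.prod_boole, ← funext_iff]

variable [Fintype F] [DecidableEq ι]

open scoped Classical in
/-- Equidistribution: the values of a random form at the vertices `u i (σ i)` are independent and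
uniform. -/
lemma card_form_eq_one_mul {u : η → κ → ι → F} (hu : ∀ i, LinearIndependent F (u i)) :
    #{c : (η → ι) → F | ∀ σ : η → κ, form c (fun i => u i (σ i)) = 1} *
      Fintype.card F ^ (Fintype.card κ ^ Fintype.card η) =
        Fintype.card F ^ (Fintype.card ι ^ Fintype.card η) := by
  let f : ((η → ι) → F) →+ ((η → κ) → F) :=
    { toFun := fun c σ => form c (fun i => u i (σ i))
      map_zero' := funext fun σ => form_zero_left _
      map_add' := fun c c' => funext fun σ => form_add_left c c' _ }
  have hf : Function.Surjective f := fun y => by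
    obtain ⟨c, hc⟩ := exists_form_eq hu y
    exact ⟨c, funext hc⟩
  have hcard := card_fiber_mul_card f hf fun _ => 1
  simpa only [f, AddMonoidHom.coe_mk, ZeroHom.coe_mk, funext_iff, Fintype.card_fun] using hcard

end MultilinearForms

section OneBoxes

variable {F η ι : Type*} [Field F] [Fintype η] [DecidableEq η] [Fintype ι]

/-- The vertex pairs of the box through the tuples `v` and `b`. -/
def corners {A : Type*} (v b : η → A) (i : η) (β : Bool) : A :=
  if β then b i else v i

/-- The tuples `v` and `b` span a box on which the form is identically `1`. -/
def IsOneBox (c : (η → ι) → F) (v b : η → ι → F) : Prop :=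
  (∀ i, b i ≠ v i) ∧ ∀ σ : η → Bool, form c (fun i => corners v b i (σ i)) = 1

variable {c : (η → ι) → F} {v b : η → ι → F}

/-- By multilinearity, a vanishing combination of `v i₀` and `b i₀` has coefficient sum `0`, so it
is a multiple of `b i₀ - v i₀`. -/
lemma IsOneBox.linearIndependent (h : IsOneBox c v b) (i₀ : η) :
    LinearIndependent F (corners v b i₀) := by
  rw [Fintype.linearIndependent_iff]
  intro g hg
  have hform := form_sum_smul_of_forall_eq_one h.2
    (Function.update (fun _ β => if β then 0 else 1) i₀ g)
  rw [form_eq_zero_of_apply_eq_zero c (i := i₀) (by rw [Function.update_self, hg]),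
    prod_eq_single i₀ (fun i _ hi => by simp [Function.update_of_ne hi]) (by simp),
    Function.update_self, Fintype.sum_bool] at hform
  have htrue : g true = -g false := eq_neg_of_add_eq_zero_left hform.symm
  have hfalse : g false • (v i₀ - b i₀) = 0 := by
    simpa [Fintype.sum_bool, corners, htrue, smul_sub, sub_eq_neg_add] using hg
  have hzero : g false = 0 :=
    (smul_eq_zero.1 hfalse).resolve_right (sub_ne_zero.2 (h.1 i₀).symm)
  exact Bool.forall_bool.2 ⟨hzero, by rw [htrue, hzero, neg_zero]⟩

lemma IsOneBox.add_smul_sub (h : IsOneBox c v b) {t : η → F} (ht : ∀ i, t i ≠ 0) :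
    IsOneBox c v (fun i => v i + t i • (b i - v i)) := by
  refine ⟨fun i hi => ?_, fun σ => ?_⟩
  · exact smul_ne_zero (ht i) (sub_ne_zero.2 (h.1 i)) (add_eq_left.1 hi)
  · have hform := form_sum_smul_of_forall_eq_one h.2
      fun i β => if σ i then (if β then t i else 1 - t i) else (if β then 0 else 1)
    rw [prod_eq_one fun i _ => by cases σ i <;> simp] at hform
    rw [← hform]
    congr 1
    funext i
    cases σ i
    · simp [corners]
    · simp only [corners, Fintype.sum_bool, if_true, Bool.false_eq_true, if_false]
      module

variable [Fintype F] [DecidableEq ι]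

open scoped Classical in
lemma IsOneBox.pow_le_card (h : IsOneBox c v b) :
    (Fintype.card F - 1) ^ Fintype.card η ≤ #{b' | IsOneBox c v b'} := by
  have hcard : #(Fintype.piFinset fun _ : η => univ.erase (0 : F)) =
      (Fintype.card F - 1) ^ Fintype.card η := by
    rw [Fintype.card_piFinset, prod_const, card_erase_of_mem (mem_univ 0), card_univ, card_univ]
  rw [← hcard]
  refine card_le_card_of_injOn (fun t i => v i + t i • (b i - v i)) (fun t ht => ?_)
    fun t _ t' _ heq => funext fun i => ?_
  · exact mem_coe.2 (mem_filter.2 ⟨mem_univ _,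
      h.add_smul_sub fun i => ne_of_mem_erase (Fintype.mem_piFinset.1 (mem_coe.1 ht) i)⟩)
  · exact smul_left_injective F (sub_ne_zero.2 (h.1 i)) (add_left_cancel (congrFun heq i))

end OneBoxes

section GraphEdges

variable {A : Type*} {d : ℕ} {g : Fin d × Bool → Fin d × A}

/-- Swapping one vertex of a transversal cannot change its part. -/
lemma fst_eq_fst_false (hinj : ∀ ε : Fin d → Bool, Function.Injective fun j => (g (j, ε j)).1)
    (j : Fin d) (β : Bool) : (g (j, β)).1 = (g (j, false)).1 := by
  obtain ⟨i, hi⟩ := Finite.surjective_of_injective (hinj fun _ => false) (g (j, β)).1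
  suffices i = j by rw [← hi, this]
  by_contra hij
  refine hij (hinj (Function.update (fun _ => false) j β) ?_)
  simpa [Function.update_of_ne hij] using hi

variable [DecidableEq A]

/-- The tuple `v` as an edge of the `η`-partite hypergraph with a copy of `A` as each part. -/
def graphEdge {η : Type*} [Fintype η] [DecidableEq η] (v : η → A) : Finset (η × A) :=
  univ.image fun i => (i, v i)

section

variable {η : Type*} [Fintype η] [DecidableEq η]

lemma mem_graphEdge {v : η → A} {x : η × A} : x ∈ graphEdge v ↔ v x.1 = x.2 := by
  rw [graphEdge, mem_image]
  exact ⟨fun ⟨i, _, hi⟩ => hi ▸ rfl, fun h => ⟨x.1, mem_univ _, Prod.ext rfl h⟩⟩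

lemma graphEdge_injective : Function.Injective (graphEdge : (η → A) → Finset (η × A)) :=
  fun _ v' h => funext fun i =>
    mem_graphEdge.1 (show (i, v' i) ∈ graphEdge _ by rw [h, mem_graphEdge])

lemma card_graphEdge (v : η → A) : #(graphEdge v) = Fintype.card η := by
  rw [graphEdge, card_image_of_injective _ fun i j h => (Prod.mk.inj h).1, card_univ]

end

lemma apply_fst_eq_snd_of_graphEdge_eq {v : Fin d → A} {ε : Fin d → Bool}
    (hv : graphEdge v = boxEdge g ε) (j : Fin d) : v (g (j, ε j)).1 = (g (j, ε j)).2 :=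
  mem_graphEdge.1 (hv ▸ apply_mem_boxEdge g ε j)

lemma injective_fst_of_graphEdge_eq (hg : Function.Injective g) {v : Fin d → A}
    {ε : Fin d → Bool} (hv : graphEdge v = boxEdge g ε) :
    Function.Injective fun j => (g (j, ε j)).1 := fun i j hij => by
  have hsnd : (g (i, ε i)).2 = (g (j, ε j)).2 := by
    rw [← apply_fst_eq_snd_of_graphEdge_eq hv, ← apply_fst_eq_snd_of_graphEdge_eq hv]
    exact congrArg v hij
  exact (Prod.mk.inj (hg (Prod.ext hij hsnd))).1

lemma exists_corners_of_box_subset {S : Finset (Fin d → A)} (hg : Function.Injective g)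
    (hbox : box g ⊆ S.image graphEdge) :
    ∃ v b : Fin d → A, (∀ i, b i ≠ v i) ∧
      ∀ σ : Fin d → Bool, (fun i => corners v b i (σ i)) ∈ S := by
  have hedge : ∀ ε, ∃ v ∈ S, graphEdge v = boxEdge g ε := fun ε =>
    mem_image.1 (hbox (mem_image_of_mem _ (mem_univ ε)))
  have hinj : ∀ ε : Fin d → Bool, Function.Injective fun j => (g (j, ε j)).1 := fun ε => by
    obtain ⟨v, -, hv⟩ := hedge ε
    exact injective_fst_of_graphEdge_eq hg hv
  let ρ : Fin d ≃ Fin d := Equiv.ofBijective (fun j => (g (j, false)).1)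
    (Finite.injective_iff_bijective.1 (hinj fun _ => false))
  have hρ : ∀ i β, (g (ρ.symm i, β)).1 = i := fun i β => by
    rw [fst_eq_fst_false hinj]
    exact ρ.apply_symm_apply i
  refine ⟨fun i => (g (ρ.symm i, false)).2, fun i => (g (ρ.symm i, true)).2, fun i hi => ?_,
    fun σ => ?_⟩
  · exact absurd (hg (Prod.ext ((hρ i true).trans (hρ i false).symm) hi)) (by simp)
  · obtain ⟨v, hvS, hv⟩ := hedge fun j => σ (ρ j)
    convert hvS using 1
    funext i
    have hvi := apply_fst_eq_snd_of_graphEdge_eq hv (ρ.symm i)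
    rw [ρ.apply_symm_apply, hρ] at hvi
    rw [hvi, corners]
    cases σ i <;> rfl

end GraphEdges

section LowerBound

variable {F : Type*} [Field F] [Fintype F] {η ι : Type*} [Fintype η]
  [DecidableEq η] [Fintype ι] [DecidableEq ι] {d s : ℕ}

open scoped Classical in
/-- The tuples at which the form is `1` and which lie in no box of such tuples. -/
noncomputable def boxFreeTuples (c : (η → ι) → F) : Finset (η → ι → F) :=
  {v | form c v = 1 ∧ ¬ ∃ b, IsOneBox c v b}

open scoped Classical in
lemma not_containsBox_image_boxFreeTuples (c : (Fin d → ι) → F) :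
    ¬ ContainsBox d ((boxFreeTuples c).image graphEdge) := by
  rintro ⟨g, hg, hbox⟩
  obtain ⟨v, b, hne, hvb⟩ := exists_corners_of_box_subset hg hbox
  have hmem : ∀ σ : Fin d → Bool, _ := fun σ => (mem_filter.1 (hvb σ)).2
  exact (hmem fun _ => false).2 ⟨b, hne, fun σ => (hmem σ).1⟩

open scoped Classical in
lemma card_boxFreeTuples_le_exBox (c : (Fin d → ι) → F) :
    #(boxFreeTuples c) ≤ exBox d (d * Fintype.card F ^ Fintype.card ι) := by
  have hcard : #(univ : Finset (Fin d × (ι → F))) = d * Fintype.card F ^ Fintype.card ι := by simp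
  rw [← card_image_of_injective (boxFreeTuples c) graphEdge_injective, ← hcard]
  refine card_le_exBox (fun _ _ => subset_univ _) (fun e he => ?_)
    (not_containsBox_image_boxFreeTuples c)
  obtain ⟨v, -, rfl⟩ := mem_image.1 he
  rw [card_graphEdge, Fintype.card_fin]

open scoped Classical in
lemma pow_mul_le_sum_card_form_eq_one :
    (Fintype.card F ^ Fintype.card ι - 1) ^ Fintype.card η *
      Fintype.card F ^ (Fintype.card ι ^ Fintype.card η) ≤
        Fintype.card F * ∑ c : (η → ι) → F, #{v | form c v = 1} := by
  set V := Fintype.piFinset fun _ : η => univ.erase (0 : ι → F)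
  have hV : #V = (Fintype.card F ^ Fintype.card ι - 1) ^ Fintype.card η := by
    rw [Fintype.card_piFinset, prod_const, card_erase_of_mem (mem_univ 0), card_univ, card_univ,
      Fintype.card_fun]
  have hfiber : ∀ v ∈ V, Fintype.card F ^ (Fintype.card ι ^ Fintype.card η) =
      Fintype.card F * #{c : (η → ι) → F | form c v = 1} := fun v hv => by
    have hcard := card_form_eq_one_mul (κ := Unit) (u := fun i _ => v i) fun i =>
      LinearIndependent.of_subsingleton () (ne_of_mem_erase (Fintype.mem_piFinset.1 hv i))
    rw [← hcard, mul_comm]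
    simp
  calc (Fintype.card F ^ Fintype.card ι - 1) ^ Fintype.card η *
        Fintype.card F ^ (Fintype.card ι ^ Fintype.card η)
      = ∑ v ∈ V, Fintype.card F * #{c : (η → ι) → F | form c v = 1} := by
        rw [← sum_congr rfl hfiber, sum_const, hV, smul_eq_mul]
    _ ≤ ∑ v, Fintype.card F * #{c : (η → ι) → F | form c v = 1} :=
        sum_le_sum_of_subset (subset_univ V)
    _ = Fintype.card F * ∑ c : (η → ι) → F, #{v | form c v = 1} := by
        rw [← mul_sum]
        simp_rw [card_filter]
        rw [sum_comm]

open scoped Classical in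
lemma card_isOneBox_mul_le (v b : η → ι → F) :
    #{c | IsOneBox c v b} * Fintype.card F ^ (2 ^ Fintype.card η) ≤
      Fintype.card F ^ (Fintype.card ι ^ Fintype.card η) := by
  by_cases hbox : ∃ c, IsOneBox c v b
  · obtain ⟨c, hc⟩ := hbox
    rw [← card_form_eq_one_mul hc.linearIndependent, Fintype.card_bool]
    gcongr
    exact fun hc' => hc'.2
  · rw [filter_eq_empty_iff.2 fun c _ hc => hbox ⟨c, hc⟩, card_empty, zero_mul]
    exact Nat.zero_le _

open scoped Classical in
/-- Each box occurs with probability at most `q ^ (-2 ^ d)`, and a tuple in one box lies in at least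
`(q - 1) ^ d` of them. The last fact gains a factor of about `q ^ d` over the naive union bound. -/
lemma sum_card_isOneBox_mul_le :
    (∑ c : (η → ι) → F, #{v | ∃ b, IsOneBox c v b}) * (Fintype.card F - 1) ^ Fintype.card η *
      Fintype.card F ^ (2 ^ Fintype.card η) ≤
        Fintype.card F ^ (2 * (Fintype.card ι * Fintype.card η)) *
          Fintype.card F ^ (Fintype.card ι ^ Fintype.card η) := by
  have hmany : ∀ c : (η → ι) → F, #{v | ∃ b, IsOneBox c v b} *
      (Fintype.card F - 1) ^ Fintype.card η ≤ ∑ v, #{b | IsOneBox c v b} := fun c =>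
    calc #{v | ∃ b, IsOneBox c v b} * (Fintype.card F - 1) ^ Fintype.card η
        ≤ ∑ v with ∃ b, IsOneBox c v b, #{b | IsOneBox c v b} :=
          card_nsmul_le_sum _ _ _ fun v hv => (mem_filter.1 hv).2.choose_spec.pow_le_card
      _ ≤ ∑ v, #{b | IsOneBox c v b} := sum_le_sum_of_subset (subset_univ _)
  have hswap : ∑ c : (η → ι) → F, ∑ v, #{b | IsOneBox c v b} =
      ∑ v : η → ι → F, ∑ b, #{c | IsOneBox c v b} := by
    simp_rw [card_filter]
    rw [sum_comm]
    exact sum_congr rfl fun v _ => sum_comm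
  have hpairs : (∑ c : (η → ι) → F, #{v | ∃ b, IsOneBox c v b}) *
      (Fintype.card F - 1) ^ Fintype.card η ≤ ∑ v : η → ι → F, ∑ b, #{c | IsOneBox c v b} := by
    rw [← hswap, sum_mul]
    exact sum_le_sum fun c _ => hmany c
  refine (Nat.mul_le_mul_right _ hpairs).trans ?_
  calc (∑ v : η → ι → F, ∑ b, #{c | IsOneBox c v b}) * Fintype.card F ^ (2 ^ Fintype.card η)
      ≤ ∑ _ : η → ι → F, ∑ _ : η → ι → F,
        Fintype.card F ^ (Fintype.card ι ^ Fintype.card η) := by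
        simp_rw [sum_mul]
        exact sum_le_sum fun v _ => sum_le_sum fun b _ => card_isOneBox_mul_le v b
    _ = _ := by
        simp only [sum_const, card_univ, Fintype.card_fun, smul_eq_mul]
        rw [← mul_assoc, ← pow_mul, ← pow_add, two_mul]

open scoped Classical in
lemma sum_card_form_eq_one_le :
    ∑ c : (Fin d → ι) → F, #{v | form c v = 1} ≤
      Fintype.card F ^ (Fintype.card ι ^ d) * exBox d (d * Fintype.card F ^ Fintype.card ι) +
        ∑ c : (Fin d → ι) → F, #{v | ∃ b, IsOneBox c v b} := by
  have hsplit : ∀ c : (Fin d → ι) → F, #{v | form c v = 1} ≤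
      exBox d (d * Fintype.card F ^ Fintype.card ι) + #{v | ∃ b, IsOneBox c v b} := fun c => by
    refine le_trans ?_ (Nat.add_le_add_right (card_boxFreeTuples_le_exBox c) _)
    refine (card_le_card fun v hv => ?_).trans (card_union_le _ _)
    simp only [boxFreeTuples, mem_union, mem_filter_univ] at hv ⊢
    tauto
  refine (sum_le_sum fun c _ => hsplit c).trans_eq ?_
  rw [sum_add_distrib, sum_const, card_univ, smul_eq_mul]
  simp

open scoped Classical in
lemma mul_sum_card_isOneBox_le (hs : s * d + 2 ≤ 2 ^ d + d)
    (hq : 2 ^ (2 * d + 1) ≤ Fintype.card F) :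
    2 ^ (d + 1) * (Fintype.card F * ∑ c : (Fin d → Fin s) → F, #{v | ∃ b, IsOneBox c v b}) ≤
      Fintype.card F ^ (s * d) * Fintype.card F ^ (s ^ d) := by
  have hmoment := sum_card_isOneBox_mul_le (F := F) (η := Fin d) (ι := Fin s)
  simp only [Fintype.card_fin] at hmoment
  set q := Fintype.card F
  set b := ∑ c : (Fin d → Fin s) → F, #{v | ∃ b, IsOneBox c v b}
  set N := q ^ (s ^ d)
  have hq₂ : 2 ≤ q := (Nat.le_self_pow (by lia) 2).trans hq
  refine le_of_mul_le_mul_left ?_ (by positivity : 0 < 2 ^ d * q ^ (s * d))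
  calc 2 ^ d * q ^ (s * d) * (2 ^ (d + 1) * (q * b))
      = 2 ^ (2 * d + 1) * (b * q ^ (s * d + 1)) := by ring
    _ ≤ q * (b * q ^ (s * d + 1)) := by gcongr
    _ = b * q ^ (s * d + 2) := by ring
    _ ≤ b * q ^ (2 ^ d + d) := by gcongr; lia
    _ = b * q ^ d * q ^ 2 ^ d := by ring
    _ ≤ b * (2 * (q - 1)) ^ d * q ^ 2 ^ d := by gcongr; lia
    _ = 2 ^ d * (b * (q - 1) ^ d * q ^ 2 ^ d) := by rw [mul_pow]; ring
    _ ≤ 2 ^ d * (q ^ (2 * (s * d)) * N) := by gcongr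
    _ = 2 ^ d * q ^ (s * d) * (q ^ (s * d) * N) := by ring

open scoped Classical in
variable (F) in
/-- On average over the forms, at most half of the edges lie in a box. -/
theorem pow_le_mul_exBox (hs : s * d + 2 ≤ 2 ^ d + d) (hs₁ : 1 ≤ s)
    (hq : 2 ^ (2 * d + 1) ≤ Fintype.card F) :
    Fintype.card F ^ (s * d) ≤
      2 ^ (d + 1) * (Fintype.card F * exBox d (d * Fintype.card F ^ s)) := by
  have hedges := pow_mul_le_sum_card_form_eq_one (F := F) (η := Fin d) (ι := Fin s)
  have hsplit := sum_card_form_eq_one_le (F := F) (d := d) (ι := Fin s)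
  have hboxes := mul_sum_card_isOneBox_le hs hq
  simp only [Fintype.card_fin] at hedges hsplit
  set q := Fintype.card F
  set b := ∑ c : (Fin d → Fin s) → F, #{v | ∃ b, IsOneBox c v b}
  set N := q ^ (s ^ d)
  have hq₂ : 2 ≤ q := (Nat.le_self_pow (by lia) 2).trans hq
  have hqs : 2 ≤ q ^ s := hq₂.trans (Nat.le_self_pow (by lia) q)
  have hN : 0 < N := by positivity
  refine le_of_mul_le_mul_right ?_ hN
  have hbound : 2 * (q ^ (s * d) * N) ≤
      2 ^ (d + 1) * (q * exBox d (d * q ^ s)) * N + q ^ (s * d) * N :=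
    calc 2 * (q ^ (s * d) * N) = 2 * ((q ^ s) ^ d * N) := by rw [pow_mul]
      _ ≤ 2 * ((2 * (q ^ s - 1)) ^ d * N) := by gcongr; lia
      _ = 2 ^ (d + 1) * ((q ^ s - 1) ^ d * N) := by rw [mul_pow]; ring
      _ ≤ 2 ^ (d + 1) * (q * (N * exBox d (d * q ^ s) + b)) := by
          exact Nat.mul_le_mul_left _ (hedges.trans (Nat.mul_le_mul_left q hsplit))
      _ = 2 ^ (d + 1) * (q * exBox d (d * q ^ s)) * N + 2 ^ (d + 1) * (q * b) := by ring
      _ ≤ 2 ^ (d + 1) * (q * exBox d (d * q ^ s)) * N + q ^ (s * d) * N := by gcongr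
  lia

end LowerBound

/-! ### Exponents and records -/

/-- Modulo the least prime factor `p` of `d`, the element `2` would have order dividing both `d`
and `p - 1`, which are coprime. -/
lemma not_dvd_two_pow_sub_one {d : ℕ} (hd : 2 ≤ d) : ¬ d ∣ 2 ^ d - 1 := by
  intro hdvd
  have hp : d.minFac.Prime := Nat.minFac_prime (by lia)
  have : Fact d.minFac.Prime := ⟨hp⟩
  have hpow : (2 : ZMod d.minFac) ^ d = 1 := by
    have hcast := (ZMod.natCast_eq_zero_iff _ _).2 ((Nat.minFac_dvd d).trans hdvd)
    rwa [Nat.cast_sub Nat.one_le_two_pow, Nat.cast_pow, Nat.cast_ofNat, Nat.cast_one,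
      sub_eq_zero] at hcast
  have hne : (2 : ZMod d.minFac) ≠ 0 := fun h => by
    rw [h, zero_pow (by lia)] at hpow
    exact zero_ne_one hpow
  have hcop : d.gcd (d.minFac - 1) = 1 :=
    Nat.coprime_of_lt_minFac (Nat.sub_ne_zero_of_lt hp.one_lt) (Nat.sub_lt hp.pos one_pos)
  have htwo := pow_gcd_eq_one.2 ⟨hpow, ZMod.pow_card_sub_one_eq_one hne⟩
  rw [hcop, pow_one, ← one_add_one_eq_two, add_eq_left] at htwo
  exact one_ne_zero htwo

/-- For `s = ⌈(2 ^ d - 1) / d⌉`, non-divisibility gives the strict inequality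
`1 / s < d / (2 ^ d - 1)`, in the form `2 ^ d ≤ s * d`. -/
lemma exists_dimension {d : ℕ} (hd : 2 ≤ d) :
    ∃ s : ℕ, 1 ≤ s ∧ s * d + 2 ≤ 2 ^ d + d ∧ 2 ^ d ≤ s * d := by
  have hdiv := Nat.div_add_mod (2 ^ d - 1) d
  have hlt : (2 ^ d - 1) % d < d := Nat.mod_lt _ (by lia)
  have hne : (2 ^ d - 1) % d ≠ 0 := fun h =>
    not_dvd_two_pow_sub_one hd (Nat.dvd_of_mod_eq_zero h)
  have hone : 1 ≤ 2 ^ d := Nat.one_le_two_pow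
  refine ⟨(2 ^ d - 1) / d + 1, Nat.le_add_left _ _, ?_, ?_⟩ <;>
  · rw [add_mul, mul_comm, one_mul]
    lia

/-- Convexity of `j ↦ 2 ^ j`: this is `(2 ^ j - 1) / j ≤ (2 ^ d - 1) / d`. -/
lemma two_pow_mul_add_le {j d : ℕ} (h : j ≤ d) : 2 ^ j * d + j ≤ j * 2 ^ d + d := by
  induction d, h using Nat.le_induction with
  | base => rw [mul_comm]
  | succ d hjd ih =>
    have hstep : 2 ^ j ≤ j * 2 ^ d + 1 := by
      rcases Nat.eq_zero_or_pos j with rfl | hj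
      · simp
      · exact (Nat.pow_le_pow_right two_pos hjd).trans
          ((Nat.le_mul_of_pos_left _ hj).trans (Nat.le_succ _))
    rw [pow_succ]
    lia

lemma exists_forall_le_of_not_bddAbove {α : Type*} [LinearOrder α] {f : ℕ → α}
    (hf : ¬ BddAbove (Set.range f)) (L : ℕ) (a : α) :
    ∃ n, L < n ∧ a < f n ∧ ∀ m ≤ n, f m ≤ f n := by
  have : Nonempty α := ⟨a⟩
  obtain ⟨K, hK⟩ := (((Set.finite_Iic L).image f).insert a).bddAbove
  have hex : ∃ n, K < f n := by simpa using not_bddAbove_iff.1 hf K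
  have hspec := Nat.find_spec hex
  refine ⟨Nat.find hex, ?_, (hK (Set.mem_insert _ _)).trans_lt hspec, fun m hm => ?_⟩
  · by_contra! hle
    exact hspec.not_ge (hK (Set.mem_insert_of_mem _ (Set.mem_image_of_mem f hle)))
  · obtain hlt | rfl := hm.lt_or_eq
    · exact (not_lt.1 (Nat.find_min hex hlt)).trans hspec.le
    · exact le_rfl

lemma rpow_le_mul_exBox_div_rpow (F : Type*) [Field F] [Fintype F] {d s : ℕ} (hd : 2 ≤ d)
    (hs : s * d + 2 ≤ 2 ^ d + d) (hs₁ : 1 ≤ s) (hq : 2 ^ (2 * d + 1) ≤ Fintype.card F) (γ : ℝ) :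
    (Fintype.card F : ℝ) ^ (s * γ - 1) ≤ 2 ^ (d + 1) * (d : ℝ) ^ (d - γ) *
      (exBox d (d * Fintype.card F ^ s) / (d * Fintype.card F ^ s : ℕ) ^ (d - γ)) := by
  have hex : ((Fintype.card F ^ (s * d) : ℕ) : ℝ) ≤
      (2 ^ (d + 1) * (Fintype.card F * exBox d (d * Fintype.card F ^ s)) : ℕ) :=
    Nat.cast_le.2 (pow_le_mul_exBox F hs hs₁ hq)
  have hq₀ : (0 : ℝ) < Fintype.card F := Nat.cast_pos.2 Fintype.card_pos
  have hd₀ : (0 : ℝ) < d := Nat.cast_pos.2 (by lia)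
  set q := Fintype.card F
  have hden : ((d * q ^ s : ℕ) : ℝ) ^ (d - γ) = (d : ℝ) ^ (d - γ) * (q : ℝ) ^ (s * (d - γ)) := by
    rw [Nat.cast_mul, Nat.cast_pow, Real.mul_rpow hd₀.le (by positivity), ← Real.rpow_natCast,
      ← Real.rpow_mul hq₀.le]
  have hexp : (q : ℝ) ^ (s * γ - 1) * (q * (q : ℝ) ^ (s * (d - γ))) = (q : ℝ) ^ (s * d) := by
    nth_rw 2 [← Real.rpow_one (q : ℝ)]
    rw [← Real.rpow_add hq₀, ← Real.rpow_add hq₀, ← Real.rpow_natCast]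
    congr 1
    push_cast
    ring
  rw [hden, mul_assoc, mul_div_assoc', mul_div_mul_left _ _ (by positivity), mul_div_assoc',
    le_div_iff₀ (by positivity)]
  refine le_of_mul_le_mul_right ?_ hq₀
  push_cast at hex
  linarith

lemma not_bddAbove_exBox_div_rpow {d s : ℕ} (hd : 2 ≤ d) (hs : s * d + 2 ≤ 2 ^ d + d)
    (hs₁ : 1 ≤ s) {γ : ℝ} (hγ : 1 < s * γ) :
    ¬ BddAbove (Set.range fun n : ℕ => exBox d n / (n : ℝ) ^ (d - γ)) := by
  refine not_bddAbove_iff.2 fun K => ?_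
  have htend := (tendsto_rpow_atTop (sub_pos.2 hγ)).comp tendsto_natCast_atTop_atTop
  obtain ⟨q, hprime, hK, hq⟩ :=
    ((Nat.frequently_atTop_iff_infinite.2 Nat.infinite_setOfPred_prime).and_eventually
      ((htend.eventually_gt_atTop (2 ^ (d + 1) * (d : ℝ) ^ (d - γ) * K)).and
        (Filter.eventually_ge_atTop (2 ^ (2 * d + 1))))).exists
  have : Fact q.Prime := ⟨hprime⟩
  have hle := rpow_le_mul_exBox_div_rpow (ZMod q) hd hs hs₁ (by rwa [ZMod.card]) γ
  rw [ZMod.card] at hle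
  have : (0 : ℝ) < d := Nat.cast_pos.2 (by lia)
  exact ⟨_, Set.mem_range_self (d * q ^ s),
    lt_of_mul_lt_mul_left (hK.trans_le hle) (by positivity)⟩

/-- Records of the Turán number: at `n`, the ratio `ex(m) / m ^ (d - γ)` is at least `1` and maximal
over `0 < m ≤ n`. -/
structure IsRecord (d : ℕ) (γ : ℝ) (n : ℕ) : Prop where
  pos : 0 < n
  rpow_le : (n : ℝ) ^ (d - γ) ≤ exBox d n
  le_mul_rpow : ∀ m, 0 < m → m ≤ n → (exBox d m : ℝ) ≤ exBox d n * ((m : ℝ) / n) ^ (d - γ)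

lemma exists_gt_isRecord {d : ℕ} {γ : ℝ}
    (h : ¬ BddAbove (Set.range fun n : ℕ => exBox d n / (n : ℝ) ^ (d - γ))) (L : ℕ) :
    ∃ n, L < n ∧ IsRecord d γ n := by
  obtain ⟨n, hLn, hone, hmax⟩ := exists_forall_le_of_not_bddAbove h L 1
  have hn : (0 : ℝ) < n := Nat.cast_pos.2 (by lia)
  refine ⟨n, hLn, by lia, ((one_lt_div (by positivity)).1 hone).le, fun m hm hmn => ?_⟩
  have hm₀ : (0 : ℝ) < m := Nat.cast_pos.2 hm
  have hratio := hmax m hmn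
  rw [div_le_iff₀ (by positivity)] at hratio
  rwa [Real.div_rpow hm₀.le hn.le, mul_div_left_comm, mul_comm]

lemma IsRecord.exBox_pos {d n : ℕ} {γ : ℝ} (h : IsRecord d γ n) : (0 : ℝ) < exBox d n := by
  have hn : (0 : ℝ) < n := Nat.cast_pos.2 h.pos
  exact (Real.rpow_pos_of_pos hn _).trans_le h.rpow_le

/-! ### Balanced supersaturation at a record -/

lemma exists_isBalanced_of_exBox_lt {X : Type*} [Fintype X] [DecidableEq X] {d m : ℕ} {p : ℝ}
    {G : Finset (Finset X)} (hmn : m ≤ Fintype.card X) (hdm : 2 * d ≤ m) (hG : ∀ e ∈ G, #e = d)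
    (hp : 0 < p) (hp₁ : p ≤ 1)
    (hpm : ∀ j ≤ d, (m / Fintype.card X : ℝ) ^ j * p ≤ p ^ 2 ^ j)
    (hlt : (exBox d m : ℝ) < #G / 2 * (m / (2 * Fintype.card X)) ^ d) :
    ∃ w : Finset (Finset X) → ℝ, IsUniformOn G (2 ^ d) w ∧ (∀ E, w E ≠ 0 → ContainsBox d E) ∧
      IsBalanced 2 p w ∧ (2 ^ (2 ^ d + 1))⁻¹ * #G ≤ deg w ∅ := by
  classical
  set 𝓑 : Finset (Finset (Finset X)) := {B | B ⊆ G ∧ ∃ g, Function.Injective g ∧ box (d := d) g = B}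
  have hbox : ∀ B ∈ 𝓑, B ⊆ G ∧ ∃ g, Function.Injective g ∧ box (d := d) g = B := fun B hB =>
    (mem_filter.1 hB).2
  have hcard : ∀ B ∈ 𝓑, #B = 2 ^ d := fun B hB => by
    obtain ⟨-, g, hg, rfl⟩ := hbox B hB
    exact card_box hg
  obtain ⟨w, hw, hsupp, hbal, htot⟩ | ⟨𝒢, h𝒢, hcov, hcost⟩ :=
    exists_isBalanced_or_cover hcard (by positivity) hp hp₁ ((2 ^ (2 ^ d + 1))⁻¹ * #G)
  · refine ⟨w, ⟨hw, fun hE => (hbox _ (hsupp _ hE)).1, fun hE => hcard _ (hsupp _ hE)⟩,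
      fun E hE => ?_, hbal, htot⟩
    obtain ⟨-, g, hg, hE⟩ := hbox E (hsupp E hE)
    exact ⟨g, hg, hE.subset⟩
  · refine absurd hlt (card_mul_le_exBox_of_cover hmn hdm hG (fun T hT => ⟨(h𝒢 T hT).1, ?_⟩)
      (fun g hg hgG => hcov _ (mem_filter.2 ⟨mem_univ _, hgG, g, hg, rfl⟩)) hp hp₁ hpm ?_).not_gt
    · obtain ⟨B, hB, hTB⟩ := (h𝒢 T hT).2
      obtain ⟨-, g, hg, rfl⟩ := hbox B hB
      exact ⟨g, hg, hTB⟩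
    · refine hcost.trans_eq ?_
      rw [pow_succ]
      field_simp

lemma exists_natCast_div_mem_Icc {d n : ℕ} {z : ℝ} (hd : 1 ≤ d) (hz : z ≤ 1)
    (hzn : 4 * d ≤ n * z) :
    ∃ m : ℕ, 2 * d ≤ m ∧ m ≤ n ∧ (m / n : ℝ) ∈ Set.Icc (z / (4 * d)) z := by
  have hd₁ : (1 : ℝ) ≤ d := Nat.one_le_cast.2 hd
  have hn : (0 : ℝ) < n := Nat.cast_pos.2 <| Nat.pos_of_ne_zero fun h => by
    rw [h, Nat.cast_zero, zero_mul] at hzn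
    linarith
  have hd_le : 2 * d ≤ ⌊n * z⌋₊ := Nat.le_floor <| by
    push_cast
    linarith
  have hle : (⌊n * z⌋₊ : ℝ) ≤ n * z := Nat.floor_le (by linarith)
  refine ⟨⌊n * z⌋₊, hd_le, ?_, ?_, (div_le_iff₀' hn).2 hle⟩
  · exact Nat.cast_le.1 (hle.trans (mul_le_of_le_one_right hn.le hz))
  · rw [div_le_div_iff₀ (by positivity) hn, mul_comm z]
    have hfloor := Nat.lt_floor_add_one (n * z)
    nlinarith

/-- The value `θ = d / (2 ^ d - 1)` is the least for which this holds at `j = d`; convexity handles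
the smaller `j`. -/
lemma pow_mul_rpow_le {d j : ℕ} {x z θ : ℝ} (hd : 1 ≤ d) (hj : j ≤ d)
    (hθ : θ * (2 ^ d - 1) = d) (hx : 0 ≤ x) (hxz : x ≤ z) (hz : 0 < z) (hz₁ : z ≤ 1) :
    x ^ j * z ^ θ ≤ (z ^ θ) ^ 2 ^ j := by
  have hexp : θ * (2 ^ j : ℕ) ≤ j + θ := by
    have hconv : (2 : ℝ) ^ j * d + j ≤ j * 2 ^ d + d := mod_cast two_pow_mul_add_le hj
    have hpos : (0 : ℝ) < 2 ^ d - 1 := sub_pos.2 (one_lt_pow₀ one_lt_two (by lia))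
    rw [← hθ] at hconv
    push_cast
    refine le_of_mul_le_mul_right ?_ hpos
    linarith
  calc x ^ j * z ^ θ ≤ z ^ j * z ^ θ := by gcongr
    _ = z ^ (j + θ) := by rw [Real.rpow_add hz, Real.rpow_natCast]
    _ ≤ z ^ (θ * (2 ^ j : ℕ)) := Real.rpow_le_rpow_of_exponent_ge hz hz₁ hexp
    _ = (z ^ θ) ^ 2 ^ j := by rw [Real.rpow_mul hz.le, Real.rpow_natCast]

lemma IsRecord.exBox_lt {d m n : ℕ} {γ N : ℝ} (h : IsRecord d γ n) (hm : 0 < m) (hmn : m ≤ n)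
    (hN : 2 ^ (d + 1) * exBox d n < (m / n : ℝ) ^ γ * N) :
    exBox d m < N / 2 * (m / (2 * n) : ℝ) ^ d := by
  have hn : (0 : ℝ) < n := Nat.cast_pos.2 h.pos
  have hx : (0 : ℝ) < m / n := div_pos (Nat.cast_pos.2 hm) hn
  have hhalf : (m / (2 * n) : ℝ) = m / n / 2 := by field_simp
  calc (exBox d m : ℝ) ≤ exBox d n * (m / n : ℝ) ^ (d - γ) := h.le_mul_rpow m hm hmn
    _ = 2 ^ (d + 1) * exBox d n * (m / n : ℝ) ^ (d - γ) / 2 ^ (d + 1) := by field_simp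
    _ < (m / n : ℝ) ^ γ * N * (m / n : ℝ) ^ (d - γ) / 2 ^ (d + 1) := by gcongr
    _ = N * (m / n : ℝ) ^ d / 2 ^ (d + 1) := by
        rw [mul_right_comm, ← Real.rpow_add hx, add_sub_cancel, Real.rpow_natCast, mul_comm]
    _ = N / 2 * (m / (2 * n) : ℝ) ^ d := by
        rw [hhalf, div_pow (m / n : ℝ), pow_succ]
        ring

theorem IsRecord.exists_isBalanced {d n : ℕ} {γ θ z : ℝ} {G : Finset (Finset (Fin n))}
    (h : IsRecord d γ n) (hd : 1 ≤ d) (hγ : 0 < γ) (hθ : θ * (2 ^ d - 1) = d) (hθ₀ : 0 ≤ θ)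
    (hz : 0 < z) (hz₁ : z ≤ 1) (hzn : 4 * d ≤ n * z) (hG : ∀ e ∈ G, #e = d)
    (hlt : 2 ^ (d + 1) * exBox d n < (z / (4 * d)) ^ γ * #G) :
    ∃ w : Finset (Finset (Fin n)) → ℝ, IsUniformOn G (2 ^ d) w ∧
      (∀ E, w E ≠ 0 → ContainsBox d E) ∧ IsBalanced 2 (z ^ θ) w ∧
        (2 ^ (2 ^ d + 1))⁻¹ * #G ≤ deg w ∅ := by
  obtain ⟨m, hdm, hmn, hzm, hmz⟩ := exists_natCast_div_mem_Icc hd hz₁ hzn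
  refine exists_isBalanced_of_exBox_lt (m := m) ?_ hdm hG (by positivity)
    (Real.rpow_le_one hz.le hz₁ hθ₀) (fun j hj => ?_) ?_ <;> rw [Fintype.card_fin]
  · exact hmn
  · exact pow_mul_rpow_le hd hj hθ (by positivity) hmz hz hz₁
  · exact h.exBox_lt (by lia) hmn (hlt.trans_le (by gcongr))

/-! ### The container step -/

/-- The scale `z` at which a record `n` yields supersaturation for hypergraphs with `M * ex(n)`
edges: vertex sets of density about `z` already contain more than `ex` edges. -/
noncomputable def scale (d : ℕ) (γ M : ℝ) : ℝ := 4 * d * (2 ^ (d + 2) / M) ^ (1 / γ)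

lemma scale_nonneg (d : ℕ) (γ : ℝ) {M : ℝ} (hM : 0 ≤ M) : 0 ≤ scale d γ M := by
  unfold scale
  positivity

lemma scale_pos {d : ℕ} (hd : 1 ≤ d) (γ : ℝ) {M : ℝ} (hM : 0 < M) : 0 < scale d γ M := by
  have : (0 : ℝ) < d := Nat.cast_pos.2 hd
  unfold scale
  positivity

lemma scale_div_rpow {d : ℕ} (hd : 1 ≤ d) {γ M : ℝ} (hγ : 0 < γ) (hM : 0 < M) :
    (scale d γ M / (4 * d)) ^ γ = 2 ^ (d + 2) / M := by
  have hd₀ : (4 * d : ℝ) ≠ 0 := by positivity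
  rw [scale, mul_div_cancel_left₀ _ hd₀, ← Real.rpow_mul (by positivity),
    one_div_mul_cancel hγ.ne', Real.rpow_one]

lemma scale_rpow (d : ℕ) (γ θ : ℝ) {M : ℝ} (hM : 0 < M) :
    scale d γ M ^ θ = scale d γ 1 ^ θ * M ^ (-(θ / γ)) := by
  have hscale : scale d γ M = scale d γ 1 * M ^ (-(1 / γ)) := by
    rw [scale, scale, Real.div_rpow (by positivity) hM.le, Real.rpow_neg hM.le, div_one]
    ring
  rw [hscale, Real.mul_rpow (scale_nonneg d γ zero_le_one) (by positivity), ← Real.rpow_mul hM.le]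
  congr 2
  ring

lemma one_le_scale_one {d : ℕ} (hd : 1 ≤ d) {γ : ℝ} (hγ : 0 < γ) : 1 ≤ scale d γ 1 := by
  have hd₁ : (1 : ℝ) ≤ d := Nat.one_le_cast.2 hd
  rw [scale, div_one]
  exact one_le_mul_of_one_le_of_one_le (by linarith)
    (Real.one_le_rpow (one_le_pow₀ one_le_two) (by positivity))

lemma four_mul_le_mul_scale (d : ℕ) {γ M x : ℝ} (hγ : 0 < γ) (hM : 0 < M) (hx : 0 ≤ x)
    (hMx : M ≤ x ^ γ) : 4 * d ≤ x * scale d γ M := by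
  have hone : 1 ≤ x * (2 ^ (d + 2) / M) ^ (1 / γ) :=
    calc (1 : ℝ) ≤ (x ^ γ / M * 2 ^ (d + 2)) ^ (1 / γ) :=
          Real.one_le_rpow (one_le_mul_of_one_le_of_one_le ((one_le_div hM).2 hMx)
            (one_le_pow₀ one_le_two)) (by positivity)
      _ = x * (2 ^ (d + 2) / M) ^ (1 / γ) := by
          rw [div_mul_eq_mul_div, mul_div_assoc, Real.mul_rpow (by positivity) (by positivity),
            ← Real.rpow_mul hx, mul_one_div_cancel hγ.ne', Real.rpow_one]
  calc (4 * d : ℝ) ≤ 4 * d * (x * (2 ^ (d + 2) / M) ^ (1 / γ)) :=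
        le_mul_of_one_le_right (by positivity) hone
    _ = x * scale d γ M := by rw [scale, mul_left_comm]

lemma tendsto_scale_rpow (d : ℕ) {γ θ : ℝ} (hγ : 0 < γ) (hθ : 0 < θ) :
    Filter.Tendsto (fun M => scale d γ M ^ θ) Filter.atTop (nhds 0) := by
  have htend := (tendsto_rpow_neg_atTop (div_pos hθ hγ)).const_mul (scale d γ 1 ^ θ)
  rw [mul_zero] at htend
  refine htend.congr' ?_
  filter_upwards [Filter.eventually_gt_atTop 0] with M hM using (scale_rpow d γ θ hM).symm

lemma pow_mul_inv_pow_ceil_le_exp {p l : ℝ} {N : ℕ} (hp : 0 < p) (hpN : 1 ≤ p * N) (hl : 0 ≤ l)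
    (hpl : p⁻¹ ≤ Real.exp l) (r : ℕ) :
    ((1 + p) ^ N * p⁻¹ ^ ⌈p * N⌉₊) ^ r ≤ Real.exp (r * (p * N * (1 + 2 * l))) := by
  have hceil : (⌈p * N⌉₊ : ℝ) ≤ 2 * (p * N) := by
    linarith [Nat.ceil_lt_add_one (zero_le_one.trans hpN)]
  calc ((1 + p) ^ N * p⁻¹ ^ ⌈p * N⌉₊) ^ r ≤ (Real.exp p ^ N * Real.exp l ^ ⌈p * N⌉₊) ^ r := by
        gcongr
        linarith [Real.add_one_le_exp p]
    _ = Real.exp (r * (p * N + l * ⌈p * N⌉₊)) := by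
        rw [← Real.exp_nat_mul, ← Real.exp_nat_mul, ← Real.exp_add, ← Real.exp_nat_mul]
        congr 1
        ring
    _ ≤ Real.exp (r * (p * N * (1 + 2 * l))) := by
        refine Real.exp_le_exp.2 (mul_le_mul_of_nonneg_left ?_ (Nat.cast_nonneg r))
        nlinarith

lemma inv_mul_rpow_neg_le_exp {K M ρ η : ℝ} (hK : 1 ≤ K) (hM : 0 < M) (hρ : 0 ≤ ρ) (hη : 0 < η) :
    (K * M ^ (-ρ))⁻¹ ≤ Real.exp (ρ * (M ^ η / η)) := by
  rw [← Real.log_le_iff_le_exp (by positivity), Real.log_inv,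
    Real.log_mul (by positivity) (by positivity), Real.log_rpow hM]
  linarith [Real.log_nonneg hK,
    mul_le_mul_of_nonneg_left (Real.log_le_rpow_div hM.le hη) hρ]

/-- Since `p N = K M ^ (-2 η) X` and `log (1 / p) = O(M ^ η)`, one container step costs only
`exp (O(X M ^ (-η)))`. -/
lemma cost_le {p M X K η : ℝ} {N : ℕ} (hη : 0 < η) (hM : 1 ≤ M) (hK : 1 ≤ K) (hX : 0 ≤ X)
    (hN : (N : ℝ) = M * X) (hp : p = K * M ^ (-(1 + 2 * η))) (hpN : 1 ≤ p * N) (r : ℕ) :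
    ((1 + p) ^ N * p⁻¹ ^ ⌈p * N⌉₊) ^ r ≤
      Real.exp (X * (r * K * (1 + 2 * (1 + 2 * η) / η) * M ^ (-η))) := by
  have hM₀ : 0 < M := by linarith
  have hp₀ : 0 < p := by
    rw [hp]
    positivity
  have hpl : p⁻¹ ≤ Real.exp ((1 + 2 * η) * (M ^ η / η)) := by
    rw [hp]
    exact inv_mul_rpow_neg_le_exp hK hM₀ (by positivity) hη
  have hpNM : p * N = K * M ^ (-η) * M ^ (-η) * X := by
    have hexp : M ^ (-η) * M ^ (-η) = M ^ (-(1 + 2 * η)) * M := by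
      rw [← Real.rpow_add hM₀, ← Real.rpow_add_one hM₀.ne']
      congr 1
      ring
    rw [mul_assoc K, hexp, hp, hN]
    ring
  have hM_le : M ^ (-η) ≤ 1 := Real.rpow_le_one_of_one_le_of_nonpos hM (by linarith)
  have hM_mul : M ^ (-η) * M ^ η = 1 := by rw [← Real.rpow_add hM₀, neg_add_cancel, Real.rpow_zero]
  refine (pow_mul_inv_pow_ceil_le_exp hp₀ hpN (by positivity) hpl r).trans (Real.exp_le_exp.2 ?_)
  calc (r : ℝ) * (p * N * (1 + 2 * ((1 + 2 * η) * (M ^ η / η))))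
      = r * K * X * M ^ (-η) * (M ^ (-η) + 2 * (1 + 2 * η) / η * (M ^ (-η) * M ^ η)) := by
        rw [hpNM]
        ring
    _ ≤ r * K * X * M ^ (-η) * (1 + 2 * (1 + 2 * η) / η * 1) := by
        rw [hM_mul]
        gcongr
    _ = X * (r * K * (1 + 2 * (1 + 2 * η) / η) * M ^ (-η)) := by ring

/-- Reducing the members of `𝓘` inside `G` to those inside subsets of size at most `(1 - δ) * #G`
costs a factor of at most `exp c` in counting. -/
def HasContainerStep {α : Type*} [DecidableEq α] (𝓘 : Finset (Finset α)) (G : Finset α)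
    (δ c : ℝ) : Prop :=
  ∀ Q : ℝ, 0 ≤ Q → (∀ C ⊆ G, (#C : ℝ) ≤ (1 - δ) * #G → (#{I ∈ 𝓘 | I ⊆ C} : ℝ) ≤ Q) →
    (#{I ∈ 𝓘 | I ⊆ G} : ℝ) ≤ Real.exp c * Q

open scoped Classical in
/-- The box-free `d`-uniform hypergraphs on `Fin n`. -/
noncomputable def boxFree (d n : ℕ) : Finset (Finset (Finset (Fin n))) :=
  {E | (∀ e ∈ E, #e = d) ∧ ¬ HasBox d n E}

lemma mem_boxFree {d n : ℕ} {E : Finset (Finset (Fin n))} :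
    E ∈ boxFree d n ↔ (∀ e ∈ E, #e = d) ∧ ¬ HasBox d n E := by
  simp [boxFree]

lemma isIndep_of_mem_boxFree {d n : ℕ} {w : Finset (Finset (Fin n)) → ℝ}
    (hw : ∀ E, w E ≠ 0 → ContainsBox d E) {I : Finset (Finset (Fin n))} (hI : I ∈ boxFree d n) :
    IsIndep w I := fun E hEI => by
  by_contra hE
  obtain ⟨g, hg, hgE⟩ := hw E hE
  exact (mem_boxFree.1 hI).2 (hasBox_iff_containsBox.2 ⟨g, hg, hgE.trans hEI⟩)

lemma IsRecord.card_div_exBox_le {d n : ℕ} {γ : ℝ} (h : IsRecord d γ n)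
    {G : Finset (Finset (Fin n))} (hG : ∀ e ∈ G, #e = d) : (#G : ℝ) / exBox d n ≤ n ^ γ := by
  have hn : (0 : ℝ) < n := Nat.cast_pos.2 h.pos
  have hcard : #G ≤ n ^ d :=
    calc #G ≤ #(powersetCard d (univ : Finset (Fin n))) :=
          card_le_card fun e he => mem_powersetCard_univ.2 (hG e he)
      _ = n.choose d := by rw [card_powersetCard, card_univ, Fintype.card_fin]
      _ ≤ n ^ d := Nat.choose_le_pow n d
  rw [div_le_iff₀ h.exBox_pos]
  calc (#G : ℝ) ≤ (n : ℝ) ^ d := mod_cast hcard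
    _ = (n : ℝ) ^ γ * (n : ℝ) ^ (d - γ) := by
        rw [← Real.rpow_add hn, add_sub_cancel, Real.rpow_natCast]
    _ ≤ (n : ℝ) ^ γ * exBox d n := by gcongr; exact h.rpow_le

lemma IsRecord.le_exBox {d n : ℕ} {γ : ℝ} (h : IsRecord d γ n) (hγ : 1 ≤ d - γ) :
    (n : ℝ) ≤ exBox d n :=
  calc (n : ℝ) = (n : ℝ) ^ (1 : ℝ) := (Real.rpow_one _).symm
    _ ≤ (n : ℝ) ^ (d - γ) := Real.rpow_le_rpow_of_exponent_le (Nat.one_le_cast.2 h.pos) hγ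
    _ ≤ exBox d n := h.rpow_le

lemma IsRecord.one_le_scale_rpow_mul_card {d n : ℕ} {γ θ : ℝ} {G : Finset (Finset (Fin n))}
    (h : IsRecord d γ n) (hd : 2 ≤ d) (hγ : 0 < γ) (hγ₁ : γ ≤ 1) (hθ₁ : θ ≤ 1)
    (hG : ∀ e ∈ G, #e = d) (hM : 1 ≤ (#G : ℝ) / exBox d n)
    (hscale : scale d γ (#G / exBox d n) ≤ 1) :
    1 ≤ scale d γ (#G / exBox d n) ^ θ * #G := by
  have hd₂ : (2 : ℝ) ≤ d := Nat.ofNat_le_cast.2 hd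
  have hz := scale_pos (d := d) (by lia) γ (zero_lt_one.trans_le hM)
  have hnG : (n : ℝ) ≤ #G := (h.le_exBox (by linarith)).trans ((one_le_div h.exBox_pos).1 hM)
  calc (1 : ℝ) ≤ 4 * d := by linarith
    _ ≤ n * scale d γ (#G / exBox d n) := four_mul_le_mul_scale d hγ (zero_lt_one.trans_le hM)
        (Nat.cast_nonneg n) (h.card_div_exBox_le hG)
    _ ≤ #G * scale d γ (#G / exBox d n) :=
        mul_le_mul_of_nonneg_right hnG hz.le
    _ ≤ #G * scale d γ (#G / exBox d n) ^ θ := by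
        gcongr
        exact Real.self_le_rpow_of_le_one hz.le hscale hθ₁
    _ = scale d γ (#G / exBox d n) ^ θ * #G := mul_comm _ _

lemma IsRecord.exists_isBalanced_scale {d n : ℕ} {γ θ : ℝ} {G : Finset (Finset (Fin n))}
    (h : IsRecord d γ n) (hd : 1 ≤ d) (hγ : 0 < γ) (hθ : θ * (2 ^ d - 1) = d) (hθ₀ : 0 ≤ θ)
    (hG : ∀ e ∈ G, #e = d) (hM : 0 < (#G : ℝ) / exBox d n)
    (hscale : scale d γ (#G / exBox d n) ≤ 1) :
    ∃ w : Finset (Finset (Fin n)) → ℝ, IsUniformOn G (2 ^ d) w ∧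
      (∀ E, w E ≠ 0 → ContainsBox d E) ∧ IsBalanced 2 (scale d γ (#G / exBox d n) ^ θ) w ∧
        (2 ^ (2 ^ d + 1))⁻¹ * #G ≤ deg w ∅ := by
  have hX := h.exBox_pos
  have hG₀ : (0 : ℝ) < #G := (div_pos_iff_of_pos_right hX).1 hM
  refine h.exists_isBalanced hd hγ hθ hθ₀ (scale_pos hd γ hM) hscale
    (four_mul_le_mul_scale d hγ hM (Nat.cast_nonneg n) (h.card_div_exBox_le hG)) hG ?_
  calc (2 ^ (d + 1) * exBox d n : ℝ) < 2 ^ (d + 2) * exBox d n := by gcongr <;> norm_num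
    _ = 2 ^ (d + 2) / (#G / exBox d n) * #G := by field_simp
    _ = (scale d γ (#G / exBox d n) / (4 * d)) ^ γ * #G := by rw [scale_div_rpow hd hγ hM]

theorem exists_hasContainerStep {d : ℕ} {γ θ η : ℝ} (hd : 2 ≤ d) (hγ : 0 < γ) (hθ₁ : θ ≤ 1)
    (hθ : θ * (2 ^ d - 1) = d) (hη : 0 < η) (hγη : θ / γ = 1 + 2 * η) :
    ∃ M₀ K δ : ℝ, 0 < K ∧ 0 < δ ∧ δ < 1 ∧ 1 ≤ (1 - δ) * M₀ ∧
      ∀ n, IsRecord d γ n → ∀ G ⊆ powersetCard d (univ : Finset (Fin n)),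
        M₀ * exBox d n ≤ #G → HasContainerStep (boxFree d n) G δ
          (exBox d n * (K * (#G / exBox d n) ^ (-η))) := by
  obtain ⟨p₀, δ, hp₀, hp₀_le, hδ, hδ₁, hcont⟩ :=
    card_le_of_container (2 ^ d) 2 (2 ^ (2 ^ d + 1))⁻¹ two_pos (by positivity)
  have hγθ : γ < θ := (one_lt_div hγ).1 (by linarith)
  have hθ₀ : 0 < θ := hγ.trans hγθ
  obtain ⟨M₀, hM₀⟩ := Filter.eventually_atTop.1
    (((tendsto_scale_rpow d hγ hθ₀).eventually_le_const hp₀).and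
      (Filter.eventually_ge_atTop (1 - δ)⁻¹))
  have hM₀_le : (1 - δ)⁻¹ ≤ M₀ := (hM₀ M₀ le_rfl).2
  have hscale_one : 1 ≤ scale d γ 1 ^ θ := Real.one_le_rpow (one_le_scale_one (by lia) hγ) hθ₀.le
  refine ⟨M₀, (2 ^ d : ℕ) * scale d γ 1 ^ θ * (1 + 2 * (1 + 2 * η) / η), δ, by positivity, hδ, hδ₁,
    (inv_le_iff_one_le_mul₀' (sub_pos.2 hδ₁)).1 hM₀_le, fun n hn G hGU hMG Q hQ hC => ?_⟩
  have hG : ∀ e ∈ G, #e = d := fun e he => mem_powersetCard_univ.1 (hGU he)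
  have hX := hn.exBox_pos
  set M : ℝ := #G / exBox d n
  have hM₀M : M₀ ≤ M := (le_div_iff₀ hX).2 hMG
  have hM₁ : 1 ≤ M := ((one_le_inv₀ (sub_pos.2 hδ₁)).2 (by linarith)).trans (hM₀_le.trans hM₀M)
  have hp_le : scale d γ M ^ θ ≤ p₀ := (hM₀ M hM₀M).1
  have hscale : scale d γ M ≤ 1 :=
    not_lt.1 fun h => (Real.one_lt_rpow h hθ₀).not_ge (hp_le.trans hp₀_le)
  have hpN := hn.one_le_scale_rpow_mul_card hd hγ (hγθ.le.trans hθ₁) hθ₁ hG hM₁ hscale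
  obtain ⟨w, hw, hbox, hbal, htot⟩ :=
    hn.exists_isBalanced_scale (by lia) hγ hθ hθ₀.le hG (by linarith) hscale
  have hcount := hcont G w {I ∈ boxFree d n | I ⊆ G} (scale d γ M ^ θ) Q ⌈scale d γ M ^ θ * #G⌉₊
    (Real.rpow_pos_of_pos (scale_pos (by lia) γ (by linarith)) θ) hp_le (Nat.le_ceil _) hw hbal htot
    (fun I hI => ⟨(mem_filter.1 hI).2, isIndep_of_mem_boxFree hbox (mem_filter.1 hI).1⟩)
    fun C hCG hC_le => (Nat.cast_le.2 <| card_le_card <|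
      filter_subset_filter _ (filter_subset _ _)).trans (hC C hCG hC_le)
  refine hcount.trans (mul_le_mul_of_nonneg_right ?_ hQ)
  refine cost_le hη hM₁ hscale_one hX.le (div_mul_cancel₀ _ hX.ne').symm ?_ hpN (2 ^ d)
  rw [← hγη, scale_rpow d γ θ (by linarith)]

/-! ### Iterating the container step -/

/-- The costs `K * t ^ (-η)` of the container steps at sizes `t`, `(1 - δ) * t`, … form a geometric
series, and `φ` is its sum. -/
lemma exists_monotone_bounded_sub_eq {K δ η : ℝ} (hK : 0 < K) (hδ : 0 < δ) (hδ₁ : δ < 1)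
    (hη : 0 < η) :
    ∃ (φ : ℝ → ℝ) (B : ℝ), Monotone φ ∧ (∀ t, 0 ≤ φ t) ∧ (∀ t, φ t ≤ B) ∧
      ∀ t, 1 ≤ (1 - δ) * t → φ t - φ ((1 - δ) * t) = K * t ^ (-η) := by
  have hδ' : 0 < 1 - δ := sub_pos.2 hδ₁
  have hgap : 0 < (1 - δ) ^ (-η) - 1 := sub_pos.2 <|
    Real.one_lt_rpow_of_pos_of_lt_one_of_neg hδ' (by linarith) (neg_lt_zero.2 hη)
  set B := K / ((1 - δ) ^ (-η) - 1)
  have hB₀ : 0 < B := div_pos hK hgap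
  refine ⟨fun t => B * (1 - max t 1 ^ (-η)), B, fun t u htu => ?_, fun t => ?_, fun t => ?_,
    fun t ht => ?_⟩
  · have : max u 1 ^ (-η) ≤ max t 1 ^ (-η) :=
      Real.rpow_le_rpow_of_nonpos (by positivity) (max_le_max_right 1 htu) (by linarith)
    dsimp only
    gcongr
  · have : max t 1 ^ (-η) ≤ 1 :=
      Real.rpow_le_one_of_one_le_of_nonpos (le_max_right t 1) (by linarith)
    exact mul_nonneg hB₀.le (by linarith)
  · exact mul_le_of_le_one_right hB₀.le (sub_le_self 1 (by positivity))
  · have ht₀ : 0 < t := pos_of_mul_pos_right (by linarith) hδ'.le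
    have ht₁ : 1 ≤ t := by nlinarith
    have hBK : B * ((1 - δ) ^ (-η) - 1) = K := div_mul_cancel₀ K hgap.ne'
    dsimp only
    rw [max_eq_left ht, max_eq_left ht₁, Real.mul_rpow hδ'.le ht₀.le, ← hBK]
    ring

lemma card_filter_subset_le_exp_card {α : Type*} [DecidableEq α] (𝓘 : Finset (Finset α))
    (G : Finset α) : (#{I ∈ 𝓘 | I ⊆ G} : ℝ) ≤ Real.exp #G := by
  have hcard : #{I ∈ 𝓘 | I ⊆ G} ≤ 2 ^ #G := by
    rw [← card_powerset]
    exact card_le_card fun I hI => mem_powerset.2 (mem_filter.1 hI).2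
  calc (#{I ∈ 𝓘 | I ⊆ G} : ℝ) ≤ 2 ^ #G := mod_cast hcard
    _ ≤ Real.exp 1 ^ #G := by
        gcongr
        linarith [Real.add_one_le_exp 1]
    _ = Real.exp #G := Real.exp_one_pow #G

theorem card_filter_subset_le_exp_of_hasContainerStep {α : Type*} [DecidableEq α]
    {𝓘 : Finset (Finset α)} {U : Finset α} {φ : ℝ → ℝ} {M₀ X δ : ℝ} (hφ : Monotone φ)
    (hφ₀ : ∀ t, 0 ≤ φ t) (hM₀ : 0 < M₀) (hX : 0 < X) (hδ : 0 < δ)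
    (hstep : ∀ G ⊆ U, M₀ * X ≤ #G →
      HasContainerStep 𝓘 G δ (X * (φ (#G / X) - φ ((1 - δ) * (#G / X)))))
    {G : Finset α} (hG : G ⊆ U) :
    (#{I ∈ 𝓘 | I ⊆ G} : ℝ) ≤ Real.exp (X * (M₀ + φ (#G / X))) := by
  induction G using Finset.strongInduction with
  | H G ih =>
    obtain hsmall | hlarge := lt_or_ge (#G : ℝ) (M₀ * X)
    · refine (card_filter_subset_le_exp_card 𝓘 G).trans (Real.exp_le_exp.2 ?_)
      nlinarith [mul_nonneg hX.le (hφ₀ (#G / X))]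
    · have hG₀ : (0 : ℝ) < #G := (mul_pos hM₀ hX).trans_le hlarge
      have hsub : ∀ C ⊆ G, (#C : ℝ) ≤ (1 - δ) * #G →
          (#{I ∈ 𝓘 | I ⊆ C} : ℝ) ≤ Real.exp (X * (M₀ + φ ((1 - δ) * (#G / X)))) := by
        intro C hCG hC
        have hne : C ≠ G := by
          rintro rfl
          nlinarith
        refine (ih C (hCG.ssubset_of_ne hne) (hCG.trans hG)).trans (Real.exp_le_exp.2 ?_)
        have hCX : #C / X ≤ (1 - δ) * (#G / X) := by
          rw [← mul_div_assoc]
          gcongr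
        gcongr
        exact hφ hCX
      refine (hstep G hG hlarge _ (Real.exp_nonneg _) hsub).trans_eq ?_
      rw [← Real.exp_add]
      congr 1
      ring

theorem exists_card_boxFree_le {d : ℕ} {γ θ : ℝ} (hd : 2 ≤ d) (hγ : 0 < γ) (hγθ : γ < θ)
    (hθ₁ : θ ≤ 1) (hθ : θ * (2 ^ d - 1) = d) :
    ∃ C : ℝ, 0 < C ∧
      ∀ n, IsRecord d γ n → (#(boxFree d n) : ℝ) ≤ Real.exp (C * exBox d n) := by
  have hη : 0 < (θ / γ - 1) / 2 := half_pos (sub_pos.2 ((one_lt_div hγ).2 hγθ))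
  obtain ⟨M₀, K, δ, hK, hδ, hδ₁, hM₀, hstep⟩ := exists_hasContainerStep hd hγ hθ₁ hθ hη (by ring)
  obtain ⟨φ, B, hφ, hφ₀, hφB, hφ_sub⟩ := exists_monotone_bounded_sub_eq hK hδ hδ₁ hη
  have hM₀_pos : 0 < M₀ := pos_of_mul_pos_right (by linarith) (sub_pos.2 hδ₁).le
  refine ⟨M₀ + B, add_pos_of_pos_of_nonneg hM₀_pos ((hφ₀ 0).trans (hφB 0)), fun n hn => ?_⟩
  have hall : {I ∈ boxFree d n | I ⊆ powersetCard d univ} = boxFree d n :=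
    filter_true_of_mem fun I hI e he => mem_powersetCard_univ.2 ((mem_boxFree.1 hI).1 e he)
  rw [← hall]
  refine (card_filter_subset_le_exp_of_hasContainerStep hφ hφ₀ hM₀_pos hn.exBox_pos hδ
    (fun G hG hlarge => ?_) Subset.rfl).trans (Real.exp_le_exp.2 ?_)
  · have hM₀_le : M₀ ≤ #G / exBox d n := (le_div_iff₀ hn.exBox_pos).2 hlarge
    rw [hφ_sub _ (hM₀.trans (mul_le_mul_of_nonneg_left hM₀_le (sub_pos.2 hδ₁).le))]
    exact hstep n hn G hG hlarge
  · rw [mul_comm]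
    gcongr
    exact hφB _

lemma exists_exponents {d : ℕ} (hd : 2 ≤ d) :
    ∃ (s : ℕ) (γ θ : ℝ), 1 ≤ s ∧ s * d + 2 ≤ 2 ^ d + d ∧ 1 < s * γ ∧ 0 < γ ∧ γ < θ ∧ θ ≤ 1 ∧
      θ * (2 ^ d - 1) = d := by
  obtain ⟨s, hs₁, hs, hds⟩ := exists_dimension hd
  have hs₀ : (0 : ℝ) < s := Nat.cast_pos.2 hs₁
  have hds' : (2 : ℝ) ^ d ≤ s * d := mod_cast hds
  have hlt : (d : ℝ) + 1 ≤ 2 ^ d := mod_cast d.lt_two_pow_self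
  have hden : (0 : ℝ) < 2 ^ d - 1 := by
    have : (0 : ℝ) < d := Nat.cast_pos.2 (by lia)
    linarith
  have hsθ : 1 / s < d / (2 ^ d - 1 : ℝ) := (div_lt_div_iff₀ hs₀ hden).2 (by linarith)
  obtain ⟨γ, hsγ, hγθ⟩ := exists_between hsθ
  exact ⟨s, γ, d / (2 ^ d - 1), hs₁, hs, (div_lt_iff₀' hs₀).1 hsγ,
    (one_div_pos.2 hs₀).trans hsγ, hγθ, (div_le_one hden).2 (by linarith),
    div_mul_cancel₀ _ hden.ne'⟩

end BoxCount

/-- Corollary 4 (counting box-free hypergraphs): for any `d ≥ 2` there is a constant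
`C > 0` and an infinite set of positive integers `n` for which the number of labeled
`K_{2,…,2}^{(d)}`-free `d`-uniform hypergraphs on vertex set `{1,…,n}` is at most
`2 ^ (C ⬝ ex_d(n, K_{2,…,2}^{(d)}))`. -/
theorem counting_box_free_hypergraphs (d : ℕ) (hd : 2 ≤ d) :
    ∃ C : ℝ, 0 < C ∧
      {n : ℕ | 0 < n ∧
        (Nat.card {E : Finset (Finset (Fin n)) //
            (∀ e ∈ E, e.card = d) ∧ ¬ HasBox d n E} : ℝ)
          ≤ (2 : ℝ) ^ (C * (exBox d n : ℝ))}.Infinite := by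
  obtain ⟨s, γ, θ, hs₁, hs, hsγ, hγ, hγθ, hθ₁, hθ⟩ := BoxCount.exists_exponents hd
  obtain ⟨C, hC, hcount⟩ := BoxCount.exists_card_boxFree_le hd hγ hγθ hθ₁ hθ
  have hlog : 0 < Real.log 2 := Real.log_pos one_lt_two
  refine ⟨C / Real.log 2, div_pos hC hlog, Set.infinite_of_forall_exists_gt fun L => ?_⟩
  obtain ⟨n, hLn, hn⟩ :=
    BoxCount.exists_gt_isRecord (BoxCount.not_bddAbove_exBox_div_rpow hd hs hs₁ hsγ) L
  refine ⟨n, ⟨hn.pos, ?_⟩, hLn⟩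
  rw [Nat.subtype_card (BoxCount.boxFree d n) fun _ => BoxCount.mem_boxFree,
    Real.rpow_def_of_pos two_pos, ← mul_assoc, mul_div_cancel₀ C hlog.ne']
  exact hcount n hn
end
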